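/- Let d ≥ 2 and let ρ, h_{λ,ℓ} be as in the context, and let c₀, C₀ > 0 satisfy c₀ < |∇ρ(ξ)| ≤ C₀ for all ξ ≠ 0. Let K_{λ,ℓ} := F^{−1}[h_{λ,ℓ}∘ρ] (a Schwartz function). Then for every N ∈ ℕ there is a constant C_N such that for all integers ℓ ≥ 0: |K_{λ,ℓ}(x)| ≤ C_N |x|^{−N} whenever |x| ≥ 2^{ℓ+2} C₀, and |K_{λ,ℓ}(x)| ≤ C_N 2^{−ℓN} whenever |x| ≤ 2^{ℓ−2} c₀. -/

import Mathlib

open MeasureTheory Filter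
open scoped ENNReal NNReal RealInnerProductSpace BigOperators Topology

noncomputable section

/-- `ℝ^d` as a Euclidean space. -/
abbrev Euc (d : ℕ) : Type := EuclideanSpace ℝ (Fin d)

/-- The geometric setup: `Ω` is a bounded open convex subset of `ℝ^d` containing the origin,
`ρ` is its Minkowski functional, which is assumed to be smooth away from the origin and
positive away from the origin. -/
structure IsMinkowskiGauge (d : ℕ) (Ω : Set (Euc d)) (ρ : Euc d → ℝ) : Prop where
  isOpen : IsOpen Ω
  convex : Convex ℝ Ω
  isBounded : Bornology.IsBounded Ω
  zero_mem : (0 : Euc d) ∈ Ω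
  eq_gauge : ρ = gauge Ω
  smooth : ContDiffOn ℝ (⊤ : ℕ∞) ρ {(0 : Euc d)}ᶜ
  pos : ∀ ξ : Euc d, ξ ≠ 0 → 0 < ρ ξ

/-- Everywhere nonvanishing Gaussian curvature of `∂Ω = {ρ = 1}`: for every `ξ ≠ 0`
the Hessian of `ρ` at `ξ` has rank `d - 1`. -/
def HasNonvanishingCurvature (d : ℕ) (ρ : Euc d → ℝ) : Prop :=
  ∀ ξ : Euc d, ξ ≠ 0 →
    LinearMap.rank ((fderiv ℝ (fderiv ℝ ρ) ξ : Euc d →L[ℝ] (Euc d →L[ℝ] ℝ)) :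
      Euc d →ₗ[ℝ] (Euc d →L[ℝ] ℝ)) = (d - 1 : ℕ)

/-- The Fourier transform `f̂(ξ) = ∫ f(y) e^{−i⟨y,ξ⟩} dy` on `ℝ^d`. -/
def FTd {d : ℕ} (f : Euc d → ℂ) (ξ : Euc d) : ℂ :=
  ∫ y : Euc d, f y * Complex.exp (-(Complex.I * (⟪y, ξ⟫ : ℂ)))

/-- The Riesz mean `R^λ_{a,t} f(x) = (2π)^{-d} ∫ (1 - ρ(ξ)^a/t^a)_+^λ f̂(ξ) e^{i⟨x,ξ⟩} dξ`. -/
def RieszMean {d : ℕ} (ρ : Euc d → ℝ) (a lam t : ℝ) (f : Euc d → ℂ) (x : Euc d) : ℂ :=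
  (((2 * Real.pi) ^ d)⁻¹ : ℝ) •
    ∫ ξ : Euc d, ((max (1 - ρ ξ ^ a / t ^ a) 0) ^ lam : ℝ) •
      (FTd f ξ * Complex.exp (Complex.I * (⟪x, ξ⟫ : ℂ)))

/-- The critical index `λ(p) = d(1/p - 1/2) - 1/2`. -/
def criticalIndex (d : ℕ) (p : ℝ) : ℝ := (d : ℝ) * (1 / p - 1 / 2) - 1 / 2

/-- One-dimensional Fourier transform `φ̂(ϱ) = ∫ φ(s) e^{-isϱ} ds`. -/
def FT1 (φ : ℝ → ℂ) (ϱ : ℝ) : ℂ :=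
  ∫ s : ℝ, φ s * Complex.exp (-(Complex.I * (s : ℂ) * (ϱ : ℂ)))

/-- One-dimensional Fourier transform of a real-valued function. -/
def FT1R (Φ : ℝ → ℝ) : ℝ → ℂ := FT1 (fun s => (Φ s : ℂ))

/-- The pieces `h_{λ,ℓ}` of the decomposition of the Riesz multiplier. -/
def hfun (χ Φ Ψ : ℝ → ℝ) (lam : ℝ) : ℕ → ℝ → ℂ
  | 0 => fun ϱ => ((2 * Real.pi)⁻¹ * χ ϱ : ℝ) •
      ∫ u : ℝ, ((max (1 - u) 0) ^ lam : ℝ) • FT1R Φ (ϱ - u)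
  | (ℓ + 1) => fun ϱ => ((2 * Real.pi)⁻¹ * χ ϱ : ℝ) •
      ∫ u : ℝ, ((max (1 - u) 0) ^ lam : ℝ) •
        (((2 : ℝ) ^ ℓ) • FT1R Ψ ((2 : ℝ) ^ ℓ * (ϱ - u)))

/-- The data entering the construction of `h_{λ,ℓ}`: a cutoff `χ ∈ C_c^∞((1/2,2))`, an even
`Φ = Φ∘ ∈ C_c^∞(ℝ)` with `Φ∘ = 1` on `[-1/2,1/2]`, `supp Φ∘ ⊆ [-1,1]`, satisfying the moment
cancellation conditions, and `Ψ(x) = Φ∘(x/2) - Φ∘(x)`. -/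
structure HData (lam : ℝ) (N0 : ℕ) (χ Φ Ψ : ℝ → ℝ) : Prop where
  hχsm : ContDiff ℝ (⊤ : ℕ∞) χ
  hχsupp : Function.support χ ⊆ Set.Ioo (1/2 : ℝ) 2
  hΦsm : ContDiff ℝ (⊤ : ℕ∞) Φ
  hΦeven : ∀ s, Φ (-s) = Φ s
  hΦone : ∀ s : ℝ, |s| ≤ 1/2 → Φ s = 1
  hΦzero : ∀ s : ℝ, 1 ≤ |s| → Φ s = 0
  hΦcanc : ∀ j : ℕ, j ≤ N0 → (j : ℝ) ≠ lam →
    (∫ ϱ in Set.Ioi (0 : ℝ), ((ϱ ^ lam : ℝ) : ℂ) * iteratedDeriv j (FT1R Φ) ϱ) = 0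
  hΨ : Ψ = fun x => Φ (x / 2) - Φ x

/-- Inverse Fourier transform on `ℝ^d`. -/
def invFTd {d : ℕ} (m : Euc d → ℂ) (x : Euc d) : ℂ :=
  (((2 * Real.pi) ^ d)⁻¹ : ℝ) •
    ∫ ξ : Euc d, m ξ * Complex.exp (Complex.I * (⟪x, ξ⟫ : ℂ))

/-- The Fourier multiplier operator `m(D) f = (𝓕⁻¹ m) * f`. -/
def mulOp {d : ℕ} (m : Euc d → ℂ) (f : Euc d → ℂ) (x : Euc d) : ℂ :=
  ∫ y : Euc d, invFTd m (x - y) * f y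

/-- The Hardy–Littlewood maximal function. -/
def HLMaximal {d : ℕ} (w : Euc d → ℝ) (x : Euc d) : ℝ≥0∞ :=
  ⨆ r : {r : ℝ // 0 < r},
    (volume (Metric.ball x r.1))⁻¹ * ∫⁻ y in Metric.ball x r.1, ENNReal.ofReal (w y)

/-- `w` is an `A₁` weight. -/
structure IsA1Weight {d : ℕ} (w : Euc d → ℝ) : Prop where
  nonneg : ∀ x, 0 ≤ w x
  locInt : LocallyIntegrable w volume
  ne_zero : ¬ (w =ᵐ[(volume : Measure (Euc d))] (0 : Euc d → ℝ))
  maximal_le : ∃ C : ℝ, ∀ᵐ x ∂(volume : Measure (Euc d)),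
    HLMaximal w x ≤ ENNReal.ofReal (C * w x)

/-- `w` satisfies a reverse Hölder inequality with exponent `σ`. -/
def IsRH {d : ℕ} (σ : ℝ) (w : Euc d → ℝ) : Prop :=
  ∃ C : ℝ, ∀ (x : Euc d) (r : ℝ), 0 < r →
    ((volume (Metric.ball x r))⁻¹ *
        ∫⁻ y in Metric.ball x r, ENNReal.ofReal (w y) ^ σ) ^ (1 / σ) ≤
      ENNReal.ofReal C *
        ((volume (Metric.ball x r))⁻¹ * ∫⁻ y in Metric.ball x r, ENNReal.ofReal (w y))

/-- The weighted `L^p(w)` (quasi-)norm. -/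
def wLpNorm {d : ℕ} (p : ℝ) (w : Euc d → ℝ) (g : Euc d → ℂ) : ℝ≥0∞ :=
  (∫⁻ x, (‖g x‖₊ : ℝ≥0∞) ^ p * ENNReal.ofReal (w x)) ^ (1 / p)

/-- The weighted weak `L^{p,∞}(w)` (quasi-)norm. -/
def wWeakNorm {d : ℕ} (p : ℝ) (w : Euc d → ℝ) (g : Euc d → ℂ) : ℝ≥0∞ :=
  ⨆ α : {α : ℝ // 0 < α},
    ENNReal.ofReal α.1 *
      (∫⁻ x in {x : Euc d | α.1 < ‖g x‖}, ENNReal.ofReal (w x)) ^ (1 / p)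

/-- A (half-open, axes-parallel) cube `x + [0,s)^d` in `ℝ^d`. -/
def IsCube {d : ℕ} (Q : Set (Euc d)) : Prop :=
  ∃ (x : Euc d) (s : ℝ), 0 < s ∧ Q = {y : Euc d | ∀ i, y i ∈ Set.Ico (x i) (x i + s)}

/-- The average `⟨f⟩_{Q,p} = (|Q|⁻¹ ∫_Q |f|^p)^{1/p}`. -/
def cubeAvg {d : ℕ} (p : ℝ) (Q : Set (Euc d)) (f : Euc d → ℂ) : ℝ≥0∞ :=
  ((volume Q)⁻¹ * ∫⁻ x in Q, (‖f x‖₊ : ℝ≥0∞) ^ p) ^ (1 / p)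

/-- A `γ`-sparse (finite) family of cubes. -/
def IsSparseFamily {d : ℕ} (γ : ℝ) (𝔖 : Finset (Set (Euc d))) : Prop :=
  (∀ Q ∈ 𝔖, IsCube Q) ∧
  ∃ E : Set (Euc d) → Set (Euc d),
    (∀ Q ∈ 𝔖, MeasurableSet (E Q) ∧ E Q ⊆ Q ∧
      ENNReal.ofReal γ * volume Q ≤ volume (E Q)) ∧
    (𝔖 : Set (Set (Euc d))).Pairwise fun Q Q' => Disjoint (E Q) (E Q')

/-- The maximal sparse form `Λ*_{p,q}(f₁,f₂)` (supremum over `1/2`-sparse families). -/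
def sparseFormMax {d : ℕ} (p q : ℝ) (f₁ f₂ : Euc d → ℂ) : ℝ≥0∞ :=
  ⨆ 𝔖 : {𝔖 : Finset (Set (Euc d)) // IsSparseFamily (1/2) 𝔖},
    ∑ Q ∈ 𝔖.1, volume Q * cubeAvg p Q f₁ * cubeAvg q Q f₂

/-- The sparse bound `T ∈ Sp(p,q)`. -/
def SparseBound {d : ℕ} (p q : ℝ) (T : (Euc d → ℂ) → Euc d → ℂ) : Prop :=
  ∃ C : ℝ, ∀ f₁ f₂ : Euc d → ℂ,
    ContDiff ℝ (⊤ : ℕ∞) f₁ → HasCompactSupport f₁ →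
    ContDiff ℝ (⊤ : ℕ∞) f₂ → HasCompactSupport f₂ →
    ENNReal.ofReal ‖∫ x, T f₁ x * f₂ x‖ ≤ ENNReal.ofReal C * sparseFormMax p q f₁ f₂

/-- The exponent `r_*(p, p∘, r∘)`. -/
def rStar (d : ℕ) (p p0 r0 : ℝ) : ℝ :=
  if p ≤ 2 * ((d : ℝ) + 1) / ((d : ℝ) + 3) then
    (((d : ℝ) + 1) / ((d : ℝ) - 1) * (1 - 1 / p))⁻¹
  else
    ((1 / r0 * (((d : ℝ) + 3) / (2 * ((d : ℝ) + 1)) - 1 / p) +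
        1 / 2 * (1 / p - 1 / p0)) /
      (((d : ℝ) + 3) / (2 * ((d : ℝ) + 1)) - 1 / p0))⁻¹

/-- The exponent `q_*(p, p∘, r∘)`, the conjugate of `r_*(p, p∘, r∘)`. -/
def qStar (d : ℕ) (p p0 r0 : ℝ) : ℝ := (1 - 1 / rStar d p p0 r0)⁻¹

/-- The trapezoid `∏_d(λ)` with corners `P₁, P₂, P₃, P₄`. -/
def trapez (d : ℕ) (lam : ℝ) : Set (ℝ × ℝ) :=
  convexHull ℝ
    {((2*lam + (d:ℝ) + 1)/(2*(d:ℝ)), ((d:ℝ) - 2*lam - 1)/(2*(d:ℝ))),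
     ((2*lam + (d:ℝ) + 1)/(2*(d:ℝ)),
       ((d:ℝ) - 1)/(2*(d:ℝ)) + lam*((d:ℝ) + 1)/((d:ℝ)*((d:ℝ) - 1))),
     (((d:ℝ) - 1)/(2*(d:ℝ)) + lam*((d:ℝ) + 1)/((d:ℝ)*((d:ℝ) - 1)),
       (2*lam + (d:ℝ) + 1)/(2*(d:ℝ))),
     (((d:ℝ) - 2*lam - 1)/(2*(d:ℝ)), (2*lam + (d:ℝ) + 1)/(2*(d:ℝ)))}

/-- A dyadic cube `2^k(m + [0,1)^d)`, recorded by its generation `k` and position `m`. -/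
structure DyadicCube (d : ℕ) where
  k : ℤ
  m : Fin d → ℤ
deriving DecidableEq

/-- The subset of `ℝ^d` corresponding to a dyadic cube. -/
def DyadicCube.set {d : ℕ} (Q : DyadicCube d) : Set (Euc d) :=
  {x : Euc d | ∀ i, x i ∈ Set.Ico ((2:ℝ) ^ Q.k * (Q.m i : ℝ)) ((2:ℝ) ^ Q.k * ((Q.m i : ℝ) + 1))}

/-- `μ(𝔔) = Σ_{Q ∈ 𝔔} |Q|`. -/
def dyadicMeasure {d : ℕ} (𝔔 : Finset (DyadicCube d)) : ℝ≥0∞ :=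
  ∑ Q ∈ 𝔔, volume Q.set

/-- The class `𝒴_M` of normalized bump functions. -/
def MemYM (M : ℕ) (χ : ℝ → ℂ) : Prop :=
  ContDiff ℝ (M : ℕ∞) χ ∧ Function.support χ ⊆ Set.Ioo (1/2 : ℝ) 2 ∧
    ∑ ν ∈ Finset.range (M + 1), (⨆ s : ℝ, ‖iteratedDeriv ν χ s‖) ≤ 1

/-- The function `Σ_{j ≥ 1} 2^{j(d+1)/2} m_j(D)[Σ_{Q ∈ 𝔇_j} f_Q]` appearing in `VBR(p,r)`,
where `m_j(ξ) = χ_j(2^j(1 - ρ(ξ)))`. -/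
def vbrSum {d : ℕ} (ρ : Euc d → ℝ) (χ : ℕ → ℝ → ℂ) (𝔉 : Finset (DyadicCube d))
    (f : DyadicCube d → Euc d → ℂ) (x : Euc d) : ℂ :=
  Finset.sum ((𝔉.image (fun Q => Q.k)).filter (fun j => 1 ≤ j)) fun (j : ℤ) =>
    ((2:ℝ) ^ ((j : ℝ) * ((d : ℝ) + 1) / 2)) •
      mulOp (fun ξ => χ j.toNat ((2:ℝ) ^ j * (1 - ρ ξ)))
        (fun y => ∑ Q ∈ 𝔉.filter (fun Q' => Q'.k = j), f Q y) x

/-- The statement `VBR(p,r)`. -/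
def VBR (d : ℕ) (ρ : Euc d → ℝ) (p r : ℝ) : Prop :=
  ∃ (M : ℕ) (C : ℝ), 1 ≤ M ∧
    ∀ χ : ℕ → ℝ → ℂ, (∀ j : ℕ, 1 ≤ j → MemYM M (χ j)) →
    ∀ (𝔉 : Finset (DyadicCube d)) (f : DyadicCube d → Euc d → ℂ),
      (∀ Q ∈ 𝔉, Function.support (f Q) ⊆ closure Q.set) →
      eLpNorm (vbrSum ρ χ 𝔉 f) (ENNReal.ofReal r) volume ≤
        ENNReal.ofReal C *
          (∑ Q ∈ 𝔉, volume Q.set * eLpNorm (f Q) (ENNReal.ofReal p) volume ^ r) ^ (1 / r)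

/-- `Hyp(p∘, r∘)`: `VBR(p,r)` holds for all `p ∈ [2(d+1)/(d+3), p∘)`
and all `r ∈ [p, r_*(p,p∘,r∘))`. -/
def Hyp (d : ℕ) (ρ : Euc d → ℝ) (p0 r0 : ℝ) : Prop :=
  ∀ p r : ℝ, 2 * ((d : ℝ) + 1) / ((d : ℝ) + 3) ≤ p → p < p0 →
    p ≤ r → r < rStar d p p0 r0 → VBR d ρ p r

/-- The operator `A_{λ,ℓ} = 2^{ℓ(λ + (d+1)/2)} h_{λ,ℓ}(ρ(D))`. -/
def Aop {d : ℕ} (ρ : Euc d → ℝ) (h : ℕ → ℝ → ℂ) (lam : ℝ) (ℓ : ℕ)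
    (f : Euc d → ℂ) (x : Euc d) : ℂ :=
  ((2:ℝ) ^ ((ℓ : ℝ) * (lam + ((d : ℝ) + 1) / 2))) • mulOp (fun ξ => h ℓ (ρ ξ)) f x

/-- `𝒜_{s,𝔔} F = Σ_{ℓ ≥ s} Σ_{Q ∈ 𝔔_{ℓ-s}} A_{λ,ℓ}[F_Q 1_Q]`. -/
def AopSum {d : ℕ} (ρ : Euc d → ℝ) (h : ℕ → ℝ → ℂ) (lam : ℝ) (s : ℕ)
    (𝔔 : Finset (DyadicCube d)) (F : DyadicCube d → Euc d → ℂ) (x : Euc d) : ℂ :=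
  ∑ Q ∈ 𝔔, Aop ρ h lam (Q.k.toNat + s) (Q.set.indicator (F Q)) x

/-- `Ξ_{s,𝔔}[F,β] = Σ_{ℓ ≥ s} Σ_{Q ∈ 𝔔_{ℓ-s}} β(Q) A_{λ,ℓ}[F_Q 1_Q]`. -/
def XiSum {d : ℕ} (ρ : Euc d → ℝ) (h : ℕ → ℝ → ℂ) (lam : ℝ) (s : ℕ)
    (𝔔 : Finset (DyadicCube d)) (F : DyadicCube d → Euc d → ℂ)
    (β : DyadicCube d → ℂ) (x : Euc d) : ℂ :=
  ∑ Q ∈ 𝔔, β Q * Aop ρ h lam (Q.k.toNat + s) (Q.set.indicator (F Q)) x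

/-- `‖F‖_{ℓ^∞(L^p)} = sup_{Q ∈ 𝔔} ‖F_Q‖_{L^p}`. -/
def supLp {d : ℕ} (p : ℝ) (𝔔 : Finset (DyadicCube d))
    (F : DyadicCube d → Euc d → ℂ) : ℝ≥0∞ :=
  ⨆ Q ∈ 𝔔, eLpNorm (F Q) (ENNReal.ofReal p) volume

/-- `‖β‖_{ℓ^{r,1}(μ)} = ∫_0^∞ μ({Q ∈ 𝔔 : |β(Q)| > α})^{1/r} dα`. -/
def lorentzNorm {d : ℕ} (r : ℝ) (𝔔 : Finset (DyadicCube d))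
    (β : DyadicCube d → ℂ) : ℝ≥0∞ :=
  ∫⁻ α in Set.Ioi (0:ℝ),
    (∑ Q ∈ 𝔔, if α < ‖β Q‖ then volume Q.set else 0) ^ (1 / r)
lemma nsp_step {d : ℕ} {P : Type*} [NormedAddCommGroup P] [NormedSpace ℝ P]
    (θ : P × Euc d → ℝ) (hθ : ContDiff ℝ (⊤ : ℕ∞) θ) (K : Set (Euc d)) (hK : IsCompact K)
    (b : Fin d → P × Euc d → ℝ) (hb : ∀ j, ContDiff ℝ (⊤ : ℕ∞) (b j))
    (a : P × Euc d → ℂ) (ha : ContDiff ℝ (⊤ : ℕ∞) a) (haK : ∀ p ξ, ξ ∉ K → a (p, ξ) = 0)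
    (p : P) (hone : ∀ ξ ∈ K, ∑ j, b j (p, ξ) * fderiv ℝ θ (p, ξ) (0, EuclideanSpace.single j 1) = 1)
    (R : ℝ) :
    (R : ℂ) * ∫ ξ, a (p, ξ) * Complex.exp (Complex.I * (R * θ (p, ξ) : ℝ)) =
      ∫ ξ, (Complex.I * ∑ j, fderiv ℝ (fun q => a q * (b j q : ℂ)) (p, ξ)
        (0, EuclideanSpace.single j 1)) * Complex.exp (Complex.I * (R * θ (p, ξ) : ℝ)) := by
  have hl : ∀ (F : Type) [NormedAddCommGroup F] [NormedSpace ℝ F] (g : P × Euc d → F), ContDiff ℝ (⊤ : ℕ∞) g → ∀ ξ e,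
      fderiv ℝ (fun ξ => g (p, ξ)) ξ e = fderiv ℝ g (p, ξ) (0, e) := by
    intro F _ _ g hg ξ e
    have h1 : HasFDerivAt (fun ξ : Euc d => (p, ξ)) (ContinuousLinearMap.inr ℝ P (Euc d)) ξ :=
      hasFDerivAt_prodMk_right p ξ
    have h2 := ((hg.differentiable (by simp)) (p, ξ)).hasFDerivAt.comp ξ h1
    have h3 := h2.fderiv
    simp only [Function.comp_def] at h3
    rw [h3]; simp
  have hin : ContDiff ℝ (⊤ : ℕ∞) (fun ξ : Euc d => (p, ξ)) := contDiff_prodMk_right p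
  set E : Euc d → ℂ := fun ξ => Complex.exp (Complex.I * (R * θ (p, ξ) : ℝ)) with hE
  have hEs : ContDiff ℝ (⊤ : ℕ∞) E := by
    refine ContDiff.cexp (contDiff_const.mul (Complex.ofRealCLM.contDiff.comp ?_))
    exact contDiff_const.mul (hθ.comp hin)
  set f : Fin d → Euc d → ℂ := fun j ξ => a (p, ξ) * (b j (p, ξ) : ℂ) with hf
  have hab : ∀ j, ContDiff ℝ (⊤ : ℕ∞) (fun q => a q * (b j q : ℂ)) := fun j =>
    ha.mul (Complex.ofRealCLM.contDiff.comp (hb j))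
  have hfs : ∀ j, ContDiff ℝ (⊤ : ℕ∞) (f j) := fun j => (hab j).comp hin
  have hfc : ∀ j, HasCompactSupport (f j) := fun j =>
    HasCompactSupport.intro hK (fun ξ hξ => by simp [hf, haK p ξ hξ])
  have hEd : ∀ ξ e, fderiv ℝ E ξ e =
      Complex.I * R * (fderiv ℝ θ (p, ξ) (0, e) : ℝ) * E ξ := by
    intro ξ e
    have h1 : HasFDerivAt (fun ξ => θ (p, ξ)) (fderiv ℝ (fun ξ => θ (p, ξ)) ξ) ξ :=
      ((hθ.comp hin).differentiable (by simp) ξ).hasFDerivAt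
    have h0 : HasFDerivAt (fun ξ => ((R * θ (p, ξ) : ℝ) : ℂ)) _ ξ :=
      Complex.ofRealCLM.hasFDerivAt.comp ξ (h1.const_mul R)
    have h2 := (h0.const_mul Complex.I).cexp
    rw [hE, h2.fderiv]
    simp [hl ℝ θ hθ]
    ring
  have ibp : ∀ j, ∫ ξ, f j ξ * fderiv ℝ E ξ (EuclideanSpace.single j 1) =
      - ∫ ξ, fderiv ℝ (f j) ξ (EuclideanSpace.single j 1) * E ξ := by
    intro j
    have hdc : Continuous fun ξ => fderiv ℝ (f j) ξ (EuclideanSpace.single j 1) :=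
      ((hfs j).continuous_fderiv (by simp)).clm_apply continuous_const
    have hds : HasCompactSupport fun ξ => fderiv ℝ (f j) ξ (EuclideanSpace.single j 1) :=
      (hfc j).fderiv_apply ℝ _
    refine integral_mul_fderiv_eq_neg_fderiv_mul_of_integrable ?_ ?_ ?_
      (fun x _ => (hfs j).differentiable (by simp) x) (fun x _ => hEs.differentiable (by simp) x)
    · exact (hdc.mul hEs.continuous).integrable_of_hasCompactSupport hds.mul_right
    · exact ((hfs j).continuous.mul ((hEs.continuous_fderiv (by simp)).clm_apply
        continuous_const)).integrable_of_hasCompactSupport (hfc j).mul_right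
    · exact ((hfs j).continuous.mul hEs.continuous).integrable_of_hasCompactSupport
        (hfc j).mul_right
  have i1 : ∀ j, Integrable fun ξ => f j ξ * fderiv ℝ E ξ (EuclideanSpace.single j 1) := fun j =>
    ((hfs j).continuous.mul ((hEs.continuous_fderiv (by simp)).clm_apply
        continuous_const)).integrable_of_hasCompactSupport (hfc j).mul_right
  have i2 : ∀ j, Integrable fun ξ => fderiv ℝ (f j) ξ (EuclideanSpace.single j 1) * E ξ := fun j =>
    ((((hfs j).continuous_fderiv (by simp)).clm_apply continuous_const).mul
      hEs.continuous).integrable_of_hasCompactSupport ((hfc j).fderiv_apply ℝ _).mul_right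
  calc (R : ℂ) * ∫ ξ, a (p, ξ) * E ξ
      = ∫ ξ, -Complex.I * ∑ j, f j ξ * fderiv ℝ E ξ (EuclideanSpace.single j 1) := by
        rw [← integral_const_mul]
        congr 1; ext ξ
        by_cases hξ : ξ ∈ K
        · have h1 := hone ξ hξ
          have h2 : (∑ j, (b j (p, ξ) : ℂ) * (fderiv ℝ θ (p, ξ) (0, EuclideanSpace.single j 1) : ℝ)) = 1 := by
            exact_mod_cast congrArg (fun t : ℝ => (t : ℂ)) h1
          have h3 : ∑ j, f j ξ * fderiv ℝ E ξ (EuclideanSpace.single j 1)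
              = (a (p, ξ) * (Complex.I * R) * E ξ) * ∑ j, (b j (p, ξ) : ℂ) * (fderiv ℝ θ (p, ξ) (0, EuclideanSpace.single j 1) : ℝ) := by
            rw [Finset.mul_sum]
            refine Finset.sum_congr rfl fun j _ => ?_
            rw [hEd]; simp only [hf]; ring
          rw [h3, h2]
          linear_combination ((R : ℂ) * a (p, ξ) * E ξ) * Complex.I_mul_I
        · simp [hf, haK p ξ hξ]
    _ = -Complex.I * ∑ j, ∫ ξ, f j ξ * fderiv ℝ E ξ (EuclideanSpace.single j 1) := by
        rw [integral_const_mul, integral_finsetSum _ (fun j _ => i1 j)]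
    _ = Complex.I * ∑ j, ∫ ξ, fderiv ℝ (f j) ξ (EuclideanSpace.single j 1) * E ξ := by
        simp_rw [ibp]; simp
    _ = _ := by
        rw [← integral_finsetSum _ (fun j _ => i2 j), ← integral_const_mul]
        congr 1; ext ξ
        rw [mul_assoc, Finset.sum_mul]
        congr 1
        refine Finset.sum_congr rfl fun j _ => ?_
        rw [← hl ℂ _ (hab j)]

lemma nsp_iter {d : ℕ} {P : Type*} [NormedAddCommGroup P] [NormedSpace ℝ P]
    (θ : P × Euc d → ℝ) (hθ : ContDiff ℝ (⊤ : ℕ∞) θ) (K : Set (Euc d)) (hK : IsCompact K)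
    (S : Set P) (hS : IsCompact S)
    (b : Fin d → P × Euc d → ℝ) (hb : ∀ j, ContDiff ℝ (⊤ : ℕ∞) (b j))
    (hone : ∀ p ∈ S, ∀ ξ ∈ K,
      ∑ j, b j (p, ξ) * fderiv ℝ θ (p, ξ) (0, EuclideanSpace.single j 1) = 1) (N : ℕ) :
    ∀ a : P × Euc d → ℂ, ContDiff ℝ (⊤ : ℕ∞) a → (∀ p ξ, ξ ∉ K → a (p, ξ) = 0) →
    ∃ C : ℝ, 0 ≤ C ∧ ∀ p ∈ S, ∀ R : ℝ, 0 < R →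
      ‖∫ ξ, a (p, ξ) * Complex.exp (Complex.I * (R * θ (p, ξ) : ℝ))‖ ≤ C * (R ^ N)⁻¹ := by
  induction N with
  | zero =>
    intro a ha haK
    obtain ⟨M, hM⟩ := (hS.prod hK).exists_bound_of_continuousOn ha.continuous.continuousOn
    refine ⟨max M 0 * volume.real K, by positivity, fun p hp R hR => ?_⟩
    have : ∫ ξ, a (p, ξ) * Complex.exp (Complex.I * (R * θ (p, ξ) : ℝ)) =
      ∫ ξ in K, a (p, ξ) * Complex.exp (Complex.I * (R * θ (p, ξ) : ℝ)) := by
      rw [setIntegral_eq_integral_of_forall_compl_eq_zero]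
      intro ξ hξ; simp [haK p ξ hξ]
    rw [this]
    simp only [pow_zero, inv_one, mul_one]
    refine norm_setIntegral_le_of_norm_le_const hK.measure_lt_top (fun ξ hξ => ?_)
    rw [norm_mul, mul_comm Complex.I, Complex.norm_exp_ofReal_mul_I, mul_one]
    exact (hM (p, ξ) ⟨hp, hξ⟩).trans (le_max_left _ _)
  | succ N ih =>
    intro a ha haK
    have hab : ∀ j, ContDiff ℝ (⊤ : ℕ∞) (fun q => a q * (b j q : ℂ)) := fun j =>
      ha.mul (Complex.ofRealCLM.contDiff.comp (hb j))
    obtain ⟨C, hC0, hC⟩ := ih (fun q => Complex.I * ∑ j, fderiv ℝ (fun q => a q * (b j q : ℂ)) q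
        (0, EuclideanSpace.single j 1)) (by
          refine contDiff_const.mul (ContDiff.sum fun j _ => ?_)
          exact ((hab j).fderiv_right (m := (⊤ : ℕ∞)) (by simp)).clm_apply contDiff_const) (by
          intro p ξ hξ
          have : ∀ j, fderiv ℝ (fun q => a q * (b j q : ℂ)) (p, ξ) = 0 := by
            intro j
            have : (fun q => a q * (b j q : ℂ)) =ᶠ[𝓝 (p, ξ)] fun _ => 0 := by
              have ho : {q : P × Euc d | q.2 ∉ K} ∈ 𝓝 (p, ξ) :=
                (hK.isClosed.isOpen_compl.preimage continuous_snd).mem_nhds hξ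
              filter_upwards [ho] with q hq
              rw [haK q.1 q.2 hq, zero_mul]
            rw [this.fderiv_eq]; simp
          simp [this])
    refine ⟨C, hC0, fun p hp R hR => ?_⟩
    have h1 := nsp_step θ hθ K hK b hb a ha haK p (hone p hp) R
    have h2 := hC p hp R hR
    rw [← h1, norm_mul, Complex.norm_real, Real.norm_of_nonneg hR.le] at h2
    rw [pow_succ', mul_inv, ← mul_assoc, mul_comm C, mul_assoc, ← div_eq_inv_mul, le_div_iff₀' hR]
    exact h2

lemma nsp {d : ℕ} {P : Type*} [NormedAddCommGroup P] [NormedSpace ℝ P]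
    (θ : P × Euc d → ℝ) (hθ : ContDiff ℝ (⊤ : ℕ∞) θ) (K : Set (Euc d)) (hK : IsCompact K)
    (S : Set P) (hS : IsCompact S)
    (hne : ∀ p ∈ S, ∀ ξ ∈ K, ∃ j, fderiv ℝ θ (p, ξ) (0, EuclideanSpace.single j 1) ≠ 0) (N : ℕ)
    (a : P × Euc d → ℂ) (ha : ContDiff ℝ (⊤ : ℕ∞) a) (haK : ∀ p ξ, ξ ∉ K → a (p, ξ) = 0) :
    ∃ C : ℝ, 0 ≤ C ∧ ∀ p ∈ S, ∀ R : ℝ, 0 < R →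
      ‖∫ ξ, a (p, ξ) * Complex.exp (Complex.I * (R * θ (p, ξ) : ℝ))‖ ≤ C * (R ^ N)⁻¹ := by
  set v : Fin d → P × Euc d → ℝ := fun j q => fderiv ℝ θ q (0, EuclideanSpace.single j 1) with hv
  have hvs : ∀ j, ContDiff ℝ (⊤ : ℕ∞) (v j) := fun j =>
    (hθ.fderiv_right (m := (⊤ : ℕ∞)) (by simp)).clm_apply contDiff_const
  set V : P × Euc d → ℝ := fun q => ∑ j, v j q ^ 2 with hV
  have hVs : ContDiff ℝ (⊤ : ℕ∞) V := ContDiff.sum fun j _ => (hvs j).pow 2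
  have hV0 : ∀ q, 0 ≤ V q := fun q => Finset.sum_nonneg fun j _ => sq_nonneg _
  have hVp : ∀ q ∈ S ×ˢ K, 0 < V q := by
    rintro ⟨p, ξ⟩ ⟨hp, hξ⟩
    obtain ⟨j, hj⟩ := hne p hp ξ hξ
    exact Finset.sum_pos' (fun j _ => sq_nonneg _) ⟨j, Finset.mem_univ _, by positivity⟩
  obtain ⟨m, hm, hmV⟩ : ∃ m > 0, ∀ q ∈ S ×ˢ K, m ≤ V q := by
    rcases (S ×ˢ K).eq_empty_or_nonempty with h | h
    · exact ⟨1, one_pos, by simp [h]⟩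
    · obtain ⟨q, hq, hmin⟩ := (hS.prod hK).exists_isMinOn h hVs.continuous.continuousOn
      exact ⟨V q, hVp q hq, fun q' hq' => hmin hq'⟩
  set D : P × Euc d → ℝ := fun q => V q + (1 - Real.smoothTransition (V q / m)) with hD
  have hD0 : ∀ q, D q ≠ 0 := by
    intro q
    have h1 := Real.smoothTransition.le_one (V q / m)
    rcases (hV0 q).eq_or_lt with h | h
    · simp [hD, ← h, Real.smoothTransition.zero]
    · have : 0 < D q := by simp only [hD]; linarith
      exact this.ne'
  have hDs : ContDiff ℝ (⊤ : ℕ∞) D :=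
    hVs.add (contDiff_const.sub (Real.smoothTransition.contDiff.comp (hVs.div_const m)))
  refine nsp_iter θ hθ K hK S hS (fun j q => v j q / D q) (fun j => (hvs j).div hDs hD0) ?_ N a ha haK
  intro p hp ξ hξ
  have h1 : D (p, ξ) = V (p, ξ) := by
    simp only [hD]
    rw [Real.smoothTransition.one_of_one_le]; · simp
    rw [one_le_div hm]; exact hmV _ ⟨hp, hξ⟩
  have h2 := (hVp (p, ξ) ⟨hp, hξ⟩).ne'
  calc _ = ∑ j, v j (p, ξ) ^ 2 / V (p, ξ) := by
        refine Finset.sum_congr rfl fun j _ => ?_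
        rw [h1]; simp only [hv]; ring
    _ = 1 := by rw [← Finset.sum_div]; exact div_self h2

lemma laplace_integrable {lam b : ℝ} (hlam : -1 < lam) (hb : 0 < b) :
    IntegrableOn (fun t : ℝ => t ^ lam * Real.exp (-(b * t))) (Set.Ioi 0) := by
  have := integrableOn_rpow_mul_exp_neg_mul_rpow hlam one_pos hb
  simpa [Real.rpow_one, neg_mul] using this

lemma laplace_differentiableOn {lam : ℝ} (hlam : 0 < lam) :
    DifferentiableOn ℂ (fun z : ℂ => ∫ t in Set.Ioi (0:ℝ), ((t ^ lam : ℝ) : ℂ) * Complex.exp (-(z * t)))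
      {z : ℂ | 0 < z.re} := by
  intro z₀ hz₀
  have hz : 0 < z₀.re := hz₀
  apply DifferentiableAt.differentiableWithinAt
  have hmeas : ∀ (e : ℝ), 0 ≤ e → ∀ z : ℂ, AEStronglyMeasurable (fun t : ℝ => ((t ^ e : ℝ) : ℂ) * Complex.exp (-(z * t))) (volume.restrict (Set.Ioi 0)) := by
    intro e he z
    refine Continuous.aestronglyMeasurable ?_
    exact (Complex.continuous_ofReal.comp (Real.continuous_rpow_const he)).mul (by fun_prop)
  have hnorm : ∀ (e : ℝ) (z : ℂ) (t : ℝ), 0 < t → ‖((t ^ e : ℝ) : ℂ) * Complex.exp (-(z * t))‖ = t ^ e * Real.exp (-(z.re * t)) := by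
    intro e z t ht
    rw [norm_mul, Complex.norm_real, Complex.norm_exp, Real.norm_of_nonneg (by positivity)]
    simp
  have hIntz : ∀ z : ℂ, 0 < z.re → Integrable (fun t : ℝ => ((t ^ lam : ℝ) : ℂ) * Complex.exp (-(z * t))) (volume.restrict (Set.Ioi 0)) := by
    intro z hz
    refine Integrable.mono' (laplace_integrable (by linarith : -1 < lam) hz) (hmeas lam hlam.le z) ?_
    filter_upwards [ae_restrict_mem measurableSet_Ioi] with t ht
    exact (hnorm lam z t ht).le
  have key := hasDerivAt_integral_of_dominated_loc_of_deriv_le (𝕜 := ℂ) (μ := volume.restrict (Set.Ioi (0:ℝ)))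
    (F := fun z t => ((t ^ lam : ℝ) : ℂ) * Complex.exp (-(z * t)))
    (F' := fun z t => -(((t ^ (lam + 1) : ℝ) : ℂ) * Complex.exp (-(z * t))))
    (bound := fun t => t ^ (lam + 1) * Real.exp (-(z₀.re / 2 * t)))
    (s := {z : ℂ | z₀.re / 2 < z.re}) (x₀ := z₀)
    ((isOpen_lt continuous_const Complex.continuous_re).mem_nhds (by simp only [Set.mem_ofPred_eq]; linarith))
    (Eventually.of_forall (hmeas lam hlam.le)) (hIntz z₀ hz) ((hmeas (lam + 1) (by linarith) z₀).neg)
    (by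
      filter_upwards [ae_restrict_mem measurableSet_Ioi] with t ht z hz'
      rw [norm_neg, hnorm _ _ _ ht]
      have ht' : (0:ℝ) < t := ht
      have : z₀.re / 2 < z.re := hz'
      gcongr)
    (laplace_integrable (by linarith) (by linarith))
    (by
      filter_upwards [ae_restrict_mem measurableSet_Ioi] with t ht z hz'
      have ht' : (0:ℝ) < t := ht
      have h1 : HasDerivAt (fun z : ℂ => -(z * t)) (-(1 * (t:ℂ))) z := ((hasDerivAt_id z).mul_const (t:ℂ)).neg
      have h2 := h1.cexp.const_mul ((t ^ lam : ℝ) : ℂ)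
      refine h2.congr_deriv ?_
      rw [Real.rpow_add_one ht'.ne']
      push_cast; ring)
  exact key.2.differentiableAt

lemma laplace_formula {lam : ℝ} (hlam : 0 < lam) {z : ℂ} (hz : 0 < z.re) :
    ∫ t in Set.Ioi (0:ℝ), ((t ^ lam : ℝ) : ℂ) * Complex.exp (-(z * t)) =
      (1 / z) ^ ((lam + 1 : ℝ) : ℂ) * Complex.Gamma (lam + 1 : ℝ) := by
  have hopen : IsOpen {z : ℂ | 0 < z.re} := isOpen_lt continuous_const Complex.continuous_re
  have hconn : IsPreconnected {z : ℂ | 0 < z.re} := (convex_halfSpace_re_gt 0).isPreconnected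
  have hre : ∀ r : ℝ, 0 < r → ∫ t in Set.Ioi (0:ℝ), ((t ^ lam : ℝ) : ℂ) * Complex.exp (-((r:ℂ) * t)) =
      (1 / (r:ℂ)) ^ ((lam + 1 : ℝ) : ℂ) * Complex.Gamma (lam + 1 : ℝ) := by
    intro r hr
    rw [← Complex.integral_cpow_mul_exp_neg_mul_Ioi (by simp; linarith) hr]
    refine setIntegral_congr_fun measurableSet_Ioi fun t ht => ?_
    have ht' : (0:ℝ) < t := ht
    rw [Complex.ofReal_cpow ht'.le]
    push_cast
    simp
  have hd2 : DifferentiableOn ℂ (fun z : ℂ => (1 / z) ^ ((lam + 1 : ℝ) : ℂ) * Complex.Gamma (lam + 1 : ℝ)) {z : ℂ | 0 < z.re} := by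
    intro z hz
    have hz' : 0 < z.re := hz
    have hz0 : z ≠ 0 := fun h => by simp [h] at hz'
    apply DifferentiableAt.differentiableWithinAt
    refine DifferentiableAt.mul_const ?_ _
    refine DifferentiableAt.cpow_const ((differentiableAt_const _).div differentiableAt_id hz0) ?_
    left
    rw [one_div, Complex.inv_re]
    exact div_pos hz' (Complex.normSq_pos.2 hz0)
  refine AnalyticOnNhd.eqOn_of_preconnected_of_frequently_eq ((laplace_differentiableOn hlam).analyticOnNhd hopen)
    (hd2.analyticOnNhd hopen) hconn (z₀ := 1) (by simp) ?_ hz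
  have ht : Tendsto (fun n : ℕ => (((1 + 1 / ((n:ℝ) + 1) : ℝ)) : ℂ)) atTop (𝓝[≠] 1) := by
    refine tendsto_nhdsWithin_iff.2 ⟨?_, Eventually.of_forall fun n => ?_⟩
    · have h := (tendsto_one_div_add_atTop_nhds_zero_nat (𝕜 := ℝ)).const_add 1
      rw [add_zero] at h
      exact (Complex.continuous_ofReal.tendsto 1).comp h
    · have : (0:ℝ) < 1 / ((n:ℝ) + 1) := by positivity
      simp only [Set.mem_compl_iff, Set.mem_singleton_iff]
      rw [← Complex.ofReal_one, Complex.ofReal_inj]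
      linarith
  refine ht.frequently (Frequently.of_forall fun n => ?_)
  exact hre _ (by positivity)

lemma laplace_bound {lam : ℝ} (hlam : 0 < lam) {ε s : ℝ} (hε : 0 < ε) (hs : 1 / 2 ≤ |s|) :
    ‖∫ t in Set.Ioi (0:ℝ), ((t ^ lam : ℝ) : ℂ) * Complex.exp (-((ε + Complex.I * s) * t))‖ ≤
      2 ^ (lam + 1) * ‖Complex.Gamma (lam + 1 : ℝ)‖ := by
  rw [laplace_formula hlam (by simpa using hε), norm_mul, Complex.norm_cpow_real]
  gcongr
  rw [norm_div, norm_one, div_le_iff₀ ?_]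
  · have := Complex.abs_im_le_norm (ε + Complex.I * s)
    simp at this; linarith
  · rw [norm_pos_iff]; intro h
    have := congrArg Complex.re h
    simp at this; linarith

open FourierTransform SchwartzMap in
lemma FT1R_schwartz (ψ : ℝ → ℝ) (hψ : ContDiff ℝ (⊤ : ℕ∞) ψ) (hc : HasCompactSupport ψ) :
    ∃ f : SchwartzMap ℝ ℂ, ∀ r, FT1R ψ r = f r := by
  have hψ' : ContDiff ℝ (⊤ : ℕ∞) (fun s => (ψ s : ℂ)) := Complex.ofRealCLM.contDiff.comp hψ
  have hc' : HasCompactSupport (fun s => (ψ s : ℂ)) := hc.comp_left (g := fun x : ℝ => (x : ℂ)) (by simp)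
  have h2 : (2 * Real.pi)⁻¹ ≠ 0 := by positivity
  refine ⟨SchwartzMap.compCLMOfContinuousLinearEquiv ℝ
    (ContinuousLinearEquiv.unitsEquivAut ℝ (Units.mk0 _ h2)) (𝓕 (hc'.toSchwartzMap hψ')), fun r => ?_⟩
  rw [SchwartzMap.compCLMOfContinuousLinearEquiv_apply, Function.comp_apply, SchwartzMap.fourier_coe,
    Real.fourier_eq']
  simp only [FT1R, FT1, smul_eq_mul]
  congr 1; ext s
  rw [mul_comm]
  simp
  left
  congr 1
  field_simp

lemma w_le {lam : ℝ} (hlam : 0 < lam) (u : ℝ) :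
    (max (1 - u) 0) ^ lam ≤ (1 + |u|) ^ ⌈lam⌉₊ := by
  have h1 : max (1 - u) 0 ≤ 1 + |u| := max_le (by linarith [neg_abs_le u]) (by positivity)
  calc (max (1 - u) 0) ^ lam ≤ (1 + |u|) ^ lam := Real.rpow_le_rpow (le_max_right _ _) h1 hlam.le
    _ ≤ (1 + |u|) ^ ((⌈lam⌉₊ : ℕ) : ℝ) :=
      Real.rpow_le_rpow_of_exponent_le (by linarith [abs_nonneg u]) (Nat.le_ceil _)
    _ = _ := Real.rpow_natCast _ _

lemma w_nonneg (lam u : ℝ) : 0 ≤ (max (1 - u) 0) ^ lam := Real.rpow_nonneg (le_max_right _ _) _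

lemma w_cont {lam : ℝ} (hlam : 0 < lam) : Continuous fun u : ℝ => (max (1 - u) 0) ^ lam :=
  (Real.continuous_rpow_const hlam.le).comp (by fun_prop)

lemma schwartz_dom {lam : ℝ} (hlam : 0 < lam) (f : SchwartzMap ℝ ℂ) (B : ℝ) :
    ∃ C : ℝ, ∀ ϱ u : ℝ, |ϱ| ≤ B → ‖((max (1 - u) 0) ^ lam : ℝ) • f (ϱ - u)‖ ≤ C * (1 + ‖u‖) ^ (-(2:ℝ)) := by
  set M := ⌈lam⌉₊ with hM
  obtain ⟨D, hD⟩ : ∃ D, ∀ r : ℝ, (1 + ‖r‖) ^ (M + 2) * ‖f r‖ ≤ D :=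
    ⟨_, fun r => by
      have := SchwartzMap.one_add_le_sup_seminorm_apply (𝕜 := ℝ) (m := (M + 2, 0)) (k := M + 2) (n := 0)
        le_rfl le_rfl f r
      simpa using this⟩
  refine ⟨(1 + B) ^ (M + 2) * D, fun ϱ u hϱ => ?_⟩
  have hB : 0 ≤ B := (abs_nonneg _).trans hϱ
  have hu : 0 < 1 + |u| := by positivity
  rw [norm_smul, Real.norm_of_nonneg (w_nonneg _ _)]
  have h2 : 1 + |u| ≤ (1 + B) * (1 + |ϱ - u|) := by
    have : |u| ≤ |ϱ| + |ϱ - u| := by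
      have := abs_sub_abs_le_abs_sub u ϱ
      rw [abs_sub_comm u ϱ] at this; linarith
    nlinarith [abs_nonneg (ϱ - u)]
  have h3 : (1 + |u|) ^ (M + 2) * ‖f (ϱ - u)‖ ≤ (1 + B) ^ (M + 2) * D := by
    calc (1 + |u|) ^ (M + 2) * ‖f (ϱ - u)‖ ≤ ((1 + B) * (1 + |ϱ - u|)) ^ (M + 2) * ‖f (ϱ - u)‖ := by gcongr
      _ = (1 + B) ^ (M + 2) * ((1 + |ϱ - u|) ^ (M + 2) * ‖f (ϱ - u)‖) := by rw [mul_pow]; ring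
      _ ≤ _ := by gcongr; exact hD _
  have h4 : (1 + ‖u‖) ^ (-(2:ℝ)) = ((1 + |u|) ^ 2)⁻¹ := by
    rw [Real.rpow_neg (by positivity), Real.norm_eq_abs]; norm_cast
  rw [h4, ← div_eq_mul_inv, le_div_iff₀ (by positivity)]
  calc _ ≤ (1 + |u|) ^ M * ‖f (ϱ - u)‖ * (1 + |u|) ^ 2 := by gcongr; exact w_le hlam u
    _ = (1 + |u|) ^ (M + 2) * ‖f (ϱ - u)‖ := by ring
    _ ≤ _ := h3

lemma dom_integrable (C : ℝ) : Integrable (fun u : ℝ => C * (1 + ‖u‖) ^ (-(2:ℝ))) :=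
  (integrable_one_add_norm (by simp)).const_mul C

lemma conv_meas {lam : ℝ} (hlam : 0 < lam) (f : SchwartzMap ℝ ℂ) (ϱ : ℝ) :
    AEStronglyMeasurable (fun u : ℝ => ((max (1 - u) 0) ^ lam : ℝ) • f (ϱ - u)) :=
  ((w_cont hlam).smul (f.continuous.comp (by fun_prop : Continuous fun u : ℝ => ϱ - u))).aestronglyMeasurable

lemma conv_integrable {lam : ℝ} (hlam : 0 < lam) (f : SchwartzMap ℝ ℂ) (ϱ : ℝ) :
    Integrable (fun u : ℝ => ((max (1 - u) 0) ^ lam : ℝ) • f (ϱ - u)) := by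
  obtain ⟨C, hC⟩ := schwartz_dom hlam f |ϱ|
  exact (dom_integrable C).mono' (conv_meas hlam f ϱ) (Eventually.of_forall fun u => hC ϱ u le_rfl)

lemma conv_hasDerivAt {lam : ℝ} (hlam : 0 < lam) (f : SchwartzMap ℝ ℂ) (ϱ : ℝ) :
    HasDerivAt (fun ϱ => ∫ u : ℝ, ((max (1 - u) 0) ^ lam : ℝ) • f (ϱ - u))
      (∫ u : ℝ, ((max (1 - u) 0) ^ lam : ℝ) • (SchwartzMap.derivCLM ℝ ℂ f) (ϱ - u)) ϱ := by
  obtain ⟨C, hC⟩ := schwartz_dom hlam (SchwartzMap.derivCLM ℝ ℂ f) (|ϱ| + 1)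
  refine (hasDerivAt_integral_of_dominated_loc_of_deriv_le (μ := volume)
    (F := fun (ϱ : ℝ) (u : ℝ) => ((max (1 - u) 0) ^ lam : ℝ) • f (ϱ - u))
    (F' := fun (ϱ : ℝ) (u : ℝ) => ((max (1 - u) 0) ^ lam : ℝ) • (SchwartzMap.derivCLM ℝ ℂ f) (ϱ - u))
    (bound := fun u => C * (1 + ‖u‖) ^ (-(2:ℝ))) (Metric.ball_mem_nhds ϱ one_pos)
    (Eventually.of_forall (conv_meas hlam f)) (conv_integrable hlam f ϱ)
    (conv_meas hlam _ ϱ) (Eventually.of_forall fun u r hr => hC r u ?_) (dom_integrable C)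
    (Eventually.of_forall fun u r hr => ?_)).2
  · rw [Metric.mem_ball, Real.dist_eq] at hr
    have := abs_sub_abs_le_abs_sub r ϱ
    linarith
  · have h := (f.hasDerivAt (r - u)).comp_sub_const r u
    exact h.const_smul ((max (1 - u) 0) ^ lam : ℝ)

lemma conv_contDiff {lam : ℝ} (hlam : 0 < lam) (n : ℕ) : ∀ (f : SchwartzMap ℝ ℂ),
    ContDiff ℝ n (fun ϱ => ∫ u : ℝ, ((max (1 - u) 0) ^ lam : ℝ) • f (ϱ - u)) := by
  induction n with
  | zero =>
    intro f
    exact contDiff_zero.2 (continuous_iff_continuousAt.2 fun ϱ => (conv_hasDerivAt hlam f ϱ).continuousAt)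
  | succ n ih =>
    intro f
    push_cast
    rw [contDiff_succ_iff_deriv]
    refine ⟨fun ϱ => (conv_hasDerivAt hlam f ϱ).differentiableAt, by simp, ?_⟩
    have : deriv (fun ϱ => ∫ u : ℝ, ((max (1 - u) 0) ^ lam : ℝ) • f (ϱ - u)) = fun ϱ =>
      ∫ u : ℝ, ((max (1 - u) 0) ^ lam : ℝ) • (SchwartzMap.derivCLM ℝ ℂ f) (ϱ - u) :=
      funext fun ϱ => (conv_hasDerivAt hlam f ϱ).deriv
    rw [this]
    exact ih _

open FourierTransform SchwartzMap in
lemma invFTd_decay {d : ℕ} (m : Euc d → ℂ) (hm : ContDiff ℝ (⊤ : ℕ∞) m) (hc : HasCompactSupport m)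
    (N : ℕ) : ∃ C : ℝ, 0 ≤ C ∧ ∀ x, ‖x‖ ^ N * ‖invFTd m x‖ ≤ C := by
  set g : SchwartzMap (Euc d) ℂ := 𝓕⁻ (hc.toSchwartzMap hm) with hg
  obtain ⟨D, hD⟩ := g.decay N 0
  have hD' : ∀ y, ‖y‖ ^ N * ‖g y‖ ≤ D := fun y => by simpa using hD.2 y
  have hpi : (0:ℝ) < 2 * Real.pi := by positivity
  have heq : ∀ x, invFTd m x = (((2 * Real.pi) ^ d)⁻¹ : ℝ) • g ((2 * Real.pi)⁻¹ • x) := by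
    intro x
    rw [hg, SchwartzMap.fourierInv_coe, Real.fourierInv_eq']
    simp only [invFTd]
    congr 2; ext ξ
    rw [smul_eq_mul, mul_comm]
    congr 2
    rw [inner_smul_right, real_inner_comm, mul_comm]
    congr 2
    push_cast
    field_simp
  refine ⟨((2 * Real.pi) ^ d)⁻¹ * (2 * Real.pi) ^ N * D, ?_, fun x => ?_⟩
  · have := hD.1
    positivity
  · have h1 := hD' ((2 * Real.pi)⁻¹ • x)
    rw [heq, norm_smul, Real.norm_of_nonneg (by positivity)]
    rw [norm_smul, Real.norm_of_nonneg (by positivity), mul_pow] at h1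
    calc _ = ((2 * Real.pi) ^ d)⁻¹ * (2 * Real.pi) ^ N * ((2 * Real.pi)⁻¹ ^ N * ‖x‖ ^ N * ‖g ((2 * Real.pi)⁻¹ • x)‖) := by
          have h : (2 * Real.pi) ^ N * (2 * Real.pi)⁻¹ ^ N = 1 := by
            rw [← mul_pow, mul_inv_cancel₀ hpi.ne', one_pow]
          linear_combination (-(((2 * Real.pi) ^ d)⁻¹ * ‖x‖ ^ N * ‖g ((2 * Real.pi)⁻¹ • x)‖)) * h
      _ ≤ _ := by gcongr


/-- damped weight -/
def wE (lam ε u : ℝ) : ℝ := (max (1 - u) 0) ^ lam * Real.exp (-(ε * (1 - u)))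

/-- Fourier transform of the damped weight -/
def gE (lam ε s : ℝ) : ℂ := ∫ u : ℝ, (wE lam ε u : ℂ) * Complex.exp (Complex.I * (s * u : ℝ))

lemma wE_cont {lam : ℝ} (hlam : 0 < lam) (ε : ℝ) : Continuous (wE lam ε) :=
  (w_cont hlam).mul (by fun_prop)

lemma wE_nonneg (lam ε u : ℝ) : 0 ≤ wE lam ε u := mul_nonneg (w_nonneg _ _) (Real.exp_pos _).le

lemma wE_le {lam ε : ℝ} (hlam : 0 < lam) (hε : 0 < ε) (u : ℝ) : wE lam ε u ≤ (max (1 - u) 0) ^ lam := by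
  rcases le_or_gt u 1 with h | h
  · refine mul_le_of_le_one_right (w_nonneg _ _) (Real.exp_le_one_iff.2 ?_)
    have : 0 ≤ ε * (1 - u) := mul_nonneg hε.le (by linarith)
    linarith
  · simp [wE, max_eq_right (by linarith : 1 - u ≤ 0), Real.zero_rpow hlam.ne']

lemma wE_integrable {lam ε : ℝ} (hlam : 0 < lam) (hε : 0 < ε) : Integrable (wE lam ε) := by
  have h1 : Integrable (fun v : ℝ => (max v 0) ^ lam * Real.exp (-(ε * v))) := by
    have h2 := laplace_integrable (by linarith : -1 < lam) hε
    rw [← integrable_indicator_iff measurableSet_Ioi] at h2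
    refine h2.congr (Eventually.of_forall fun v => ?_)
    by_cases hv : v ∈ Set.Ioi (0:ℝ)
    · rw [Set.indicator_of_mem hv]
      simp only
      rw [max_eq_left (le_of_lt hv)]
    · rw [Set.indicator_of_notMem hv]
      simp only [Set.mem_Ioi, not_lt] at hv
      simp [max_eq_right hv, Real.zero_rpow hlam.ne']
  exact h1.comp_sub_left 1

lemma gE_bound {lam ε s : ℝ} (hlam : 0 < lam) (hε : 0 < ε) (hs : 1 / 2 ≤ |s|) :
    ‖gE lam ε s‖ ≤ 2 ^ (lam + 1) * ‖Complex.Gamma (lam + 1 : ℝ)‖ := by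
  have h1 : gE lam ε s = ∫ v : ℝ, (((max v 0) ^ lam * Real.exp (-(ε * v)) : ℝ) : ℂ) *
      Complex.exp (Complex.I * (s * (1 - v) : ℝ)) := by
    rw [← integral_sub_left_eq_self _ volume (1:ℝ)]
    simp only [gE, wE, sub_sub_cancel]
  have h2 : gE lam ε s = Complex.exp (Complex.I * s) *
      ∫ t in Set.Ioi (0:ℝ), ((t ^ lam : ℝ) : ℂ) * Complex.exp (-((ε + Complex.I * s) * t)) := by
    rw [h1, ← integral_const_mul, ← integral_indicator measurableSet_Ioi]
    congr 1; ext v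
    by_cases hv : v ∈ Set.Ioi (0:ℝ)
    · rw [Set.indicator_of_mem hv]
      rw [max_eq_left (le_of_lt hv)]
      push_cast
      rw [mul_assoc, ← Complex.exp_add, mul_left_comm (Complex.exp _), ← Complex.exp_add]
      congr 2; ring
    · rw [Set.indicator_of_notMem hv]
      simp only [Set.mem_Ioi, not_lt] at hv
      simp [max_eq_right hv, Real.zero_rpow hlam.ne']
  have h3 : ‖Complex.exp (Complex.I * s)‖ = 1 := by
    rw [mul_comm, Complex.norm_exp_ofReal_mul_I]
  rw [h2, norm_mul, h3, one_mul]
  exact laplace_bound hlam hε hs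

lemma gE_meas {lam : ℝ} (hlam : 0 < lam) (ε : ℝ) : StronglyMeasurable (gE lam ε) := by
  refine StronglyMeasurable.integral_prod_right (f := fun (s u : ℝ) =>
    (wE lam ε u : ℂ) * Complex.exp (Complex.I * (s * u : ℝ))) ?_
  refine Continuous.stronglyMeasurable ?_
  have := (wE_cont hlam ε)
  simp only [Function.uncurry_def]
  fun_prop

lemma conv_formula {lam ε : ℝ} (hlam : 0 < lam) (hε : 0 < ε) (ψ : ℝ → ℝ) (hψ : Continuous ψ)
    (hψi : Integrable ψ) (ϱ : ℝ) :
    ∫ u : ℝ, (wE lam ε u : ℝ) • FT1R ψ (ϱ - u) =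
      ∫ s : ℝ, (ψ s : ℂ) * gE lam ε s * Complex.exp (-(Complex.I * s * ϱ)) := by
  have hw := wE_cont hlam ε
  have e1 : ∀ u : ℝ, (wE lam ε u : ℝ) • FT1R ψ (ϱ - u) =
      ∫ s : ℝ, (wE lam ε u : ℂ) * ((ψ s : ℂ) * Complex.exp (-(Complex.I * s * (ϱ - u : ℝ)))) := by
    intro u
    rw [integral_const_mul, Complex.real_smul]; rfl
  simp_rw [e1]
  rw [integral_integral_swap]
  · congr 1; ext s
    rw [gE, mul_assoc, ← integral_mul_const, ← integral_const_mul]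
    congr 1; ext u
    rw [mul_left_comm, mul_assoc _ (Complex.exp _), ← Complex.exp_add]
    congr 3
    push_cast; ring
  · have h1 : Integrable (fun z : ℝ × ℝ => wE lam ε z.1 * ψ z.2) (volume.prod volume) :=
      (wE_integrable hlam hε).mul_prod hψi
    refine h1.mono (Continuous.aestronglyMeasurable ?_) (Eventually.of_forall fun z => ?_)
    · simp only [Function.uncurry_def]; fun_prop
    · simp only [Function.uncurry_def]
      rw [norm_mul, norm_mul, Complex.norm_real, Complex.norm_real, norm_mul, Complex.norm_exp]
      simp

lemma psi_bound {lam ε : ℝ} (hlam : 0 < lam) (hε : 0 < ε) (ψ : ℝ → ℝ)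
    (A B M : ℝ) (hA : 1 / 2 ≤ A) (hB : 0 ≤ B) (hM0 : 0 ≤ M) (hsupp : ∀ s, ψ s ≠ 0 → A ≤ |s| ∧ |s| ≤ B)
    (hM : ∀ s, |ψ s| ≤ M) (I : ℝ → ℂ) (D : ℝ) (hD : 0 ≤ D)
    (hI : ∀ s, A ≤ |s| → |s| ≤ B → ‖I s‖ ≤ D) :
    ‖∫ s : ℝ, (ψ s : ℂ) * gE lam ε s * I s‖ ≤
      M * (2 ^ (lam + 1) * ‖Complex.Gamma (lam + 1 : ℝ)‖) * D * (2 * B) := by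
  have h0 : ∫ s : ℝ, (ψ s : ℂ) * gE lam ε s * I s = ∫ s in Set.Icc (-B) B, (ψ s : ℂ) * gE lam ε s * I s := by
    rw [setIntegral_eq_integral_of_forall_compl_eq_zero]
    intro s hs
    have : ψ s = 0 := by
      by_contra h
      exact hs (abs_le.1 (hsupp s h).2)
    simp [this]
  rw [h0]
  have hv : volume.real (Set.Icc (-B) B) = 2 * B := by
    rw [Real.volume_real_Icc_of_le (by linarith)]; ring
  rw [← hv]
  refine norm_setIntegral_le_of_norm_le_const isCompact_Icc.measure_lt_top (fun s _ => ?_)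
  by_cases h : ψ s = 0
  · simp [h]; positivity
  · obtain ⟨h1, h2⟩ := hsupp s h
    rw [norm_mul, norm_mul, Complex.norm_real]
    gcongr
    · exact hM s
    · exact gE_bound hlam hε (hA.trans h1)
    · exact hI s h1 h2

lemma kernel_bound {d : ℕ} {lam : ℝ} (hlam : 0 < lam) (ψ : ℝ → ℝ) (hψ : ContDiff ℝ (⊤ : ℕ∞) ψ)
    (hψc : HasCompactSupport ψ)
    (A B M : ℝ) (hA : 1 / 2 ≤ A) (hB : 0 ≤ B) (hM0 : 0 ≤ M) (hsupp : ∀ s, ψ s ≠ 0 → A ≤ |s| ∧ |s| ≤ B)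
    (hM : ∀ s, |ψ s| ≤ M) (q r : Euc d → ℝ) (hq : Continuous q) (hqc : HasCompactSupport q)
    (hr : Continuous r) (x : Euc d) (D : ℝ) (hD : 0 ≤ D)
    (hI : ∀ s : ℝ, A ≤ |s| → |s| ≤ B →
      ‖∫ ξ, (q ξ : ℂ) * Complex.exp (Complex.I * (⟪x, ξ⟫ - s * r ξ : ℝ))‖ ≤ D) :
    ‖invFTd (fun ξ => ((2 * Real.pi)⁻¹ * q ξ : ℝ) •
      ∫ u : ℝ, ((max (1 - u) 0) ^ lam : ℝ) • FT1R ψ (r ξ - u)) x‖ ≤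
      ((2 * Real.pi) ^ d)⁻¹ * ((2 * Real.pi)⁻¹ *
        (M * (2 ^ (lam + 1) * ‖Complex.Gamma (lam + 1 : ℝ)‖) * D * (2 * B))) := by
  obtain ⟨f, hf⟩ := FT1R_schwartz ψ hψ hψc
  have hψi : Integrable ψ := hψ.continuous.integrable_of_hasCompactSupport hψc
  have hqi : Integrable q := hq.integrable_of_hasCompactSupport hqc
  set G : ℝ := 2 ^ (lam + 1) * ‖Complex.Gamma (lam + 1 : ℝ)‖ with hG
  have hG0 : 0 ≤ G := by positivity
  set e : ℕ → ℝ := fun n => 1 / ((n : ℝ) + 1) with he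
  have hepos : ∀ n, 0 < e n := fun n => by simp only [he]; positivity
  have hetend : Tendsto e atTop (𝓝 0) := tendsto_one_div_add_atTop_nhds_zero_nat
  set F : ℕ → ℝ → ℂ := fun n ϱ => ∫ u : ℝ, (wE lam (e n) u : ℝ) • FT1R ψ (ϱ - u) with hF
  set F0 : ℝ → ℂ := fun ϱ => ∫ u : ℝ, ((max (1 - u) 0) ^ lam : ℝ) • FT1R ψ (ϱ - u) with hF0
  have hFform : ∀ n ϱ, F n ϱ = ∫ s : ℝ, (ψ s : ℂ) * gE lam (e n) s * Complex.exp (-(Complex.I * s * ϱ)) :=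
    fun n ϱ => conv_formula hlam (hepos n) ψ hψ.continuous hψi ϱ
  have hFb : ∀ n ϱ, ‖F n ϱ‖ ≤ M * G * 1 * (2 * B) := by
    intro n ϱ
    rw [hFform]
    refine psi_bound hlam (hepos n) ψ A B M hA hB hM0 hsupp hM _ 1 zero_le_one fun s _ _ => ?_
    rw [Complex.norm_exp]; simp
  have hFlim : ∀ ϱ, Tendsto (fun n => F n ϱ) atTop (𝓝 (F0 ϱ)) := by
    intro ϱ
    simp only [hF, hF0, hf]
    refine tendsto_integral_of_dominated_convergence _ (fun n => ?_) (conv_integrable hlam f ϱ).norm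
      (fun n => Eventually.of_forall fun u => ?_) (Eventually.of_forall fun u => ?_)
    · exact ((wE_cont hlam _).smul (f.continuous.comp
        (by fun_prop : Continuous fun u : ℝ => ϱ - u))).aestronglyMeasurable
    · rw [norm_smul, norm_smul, Real.norm_of_nonneg (wE_nonneg _ _ _), Real.norm_of_nonneg (w_nonneg _ _)]
      gcongr
      exact wE_le hlam (hepos n) u
    · refine Tendsto.smul_const ?_ _
      have h1 : Tendsto (fun n => Real.exp (-(e n * (1 - u)))) atTop (𝓝 1) := by
        have : Tendsto (fun n => -(e n * (1 - u))) atTop (𝓝 (-(0 * (1 - u)))) :=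
          (hetend.mul_const _).neg
        have h2 := (Real.continuous_exp.tendsto _).comp this
        simpa [Function.comp_def] using h2
      have h2 := h1.const_mul ((max (1 - u) 0) ^ lam)
      simpa [wE] using h2
  have hFmeas : ∀ n, StronglyMeasurable fun ξ : Euc d => F n (r ξ) := by
    intro n
    refine StronglyMeasurable.integral_prod_right (f := fun (ξ : Euc d) (u : ℝ) =>
      (wE lam (e n) u : ℝ) • FT1R ψ (r ξ - u)) ?_
    refine Continuous.stronglyMeasurable ?_
    have := (wE_cont hlam (e n))
    have := f.continuous
    simp only [Function.uncurry_def, hf]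
    fun_prop
  set X : Euc d → ℂ := fun ξ => Complex.exp (Complex.I * (⟪x, ξ⟫ : ℂ)) with hX
  have hXc : Continuous X := by simp only [hX]; fun_prop
  have hXn : ∀ ξ, ‖X ξ‖ = 1 := fun ξ => by
    simp only [hX]; rw [mul_comm, Complex.norm_exp_ofReal_mul_I]
  have hKlim : Tendsto (fun n => ∫ ξ, (q ξ : ℂ) * F n (r ξ) * X ξ) atTop
      (𝓝 (∫ ξ, (q ξ : ℂ) * F0 (r ξ) * X ξ)) := by
    refine tendsto_integral_of_dominated_convergence (fun ξ => ‖q ξ‖ * (M * G * 1 * (2 * B))) (fun n => ?_)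
      (hqi.norm.mul_const _) (fun n => Eventually.of_forall fun ξ => ?_) (Eventually.of_forall fun ξ => ?_)
    · exact (((Complex.continuous_ofReal.comp hq).aestronglyMeasurable).mul
        (hFmeas n).aestronglyMeasurable).mul hXc.aestronglyMeasurable
    · rw [norm_mul, norm_mul, hXn, mul_one, Complex.norm_real]
      gcongr
      exact hFb n _
    · exact ((hFlim (r ξ)).const_mul _).mul_const _
  have hKn : ∀ n, ‖∫ ξ, (q ξ : ℂ) * F n (r ξ) * X ξ‖ ≤ M * G * D * (2 * B) := by
    intro n
    have h1 : ∫ ξ, (q ξ : ℂ) * F n (r ξ) * X ξ = ∫ s : ℝ, (ψ s : ℂ) * gE lam (e n) s *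
        ∫ ξ, (q ξ : ℂ) * Complex.exp (Complex.I * (⟪x, ξ⟫ - s * r ξ : ℝ)) := by
      have e1 : ∀ ξ, (q ξ : ℂ) * F n (r ξ) * X ξ = ∫ s : ℝ, (q ξ : ℂ) *
          ((ψ s : ℂ) * gE lam (e n) s * Complex.exp (-(Complex.I * s * (r ξ : ℝ)))) * X ξ := by
        intro ξ
        rw [integral_mul_const, integral_const_mul, hFform]
      simp_rw [e1]
      rw [integral_integral_swap]
      · congr 1; ext s
        rw [← integral_const_mul]
        congr 1; ext ξ
        have : Complex.exp (Complex.I * (⟪x, ξ⟫ - s * r ξ : ℝ)) =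
            Complex.exp (-(Complex.I * s * (r ξ : ℝ))) * X ξ := by
          rw [hX, ← Complex.exp_add]; congr 1; push_cast; ring
        rw [this]; ring
      · have hi : Integrable (fun s : ℝ => ψ s * G) := hψi.mul_const G
        have h1 : Integrable (fun z : Euc d × ℝ => q z.1 * (ψ z.2 * G)) (volume.prod volume) :=
          hqi.mul_prod hi
        refine h1.mono ?_ (Eventually.of_forall fun z => ?_)
        · simp only [Function.uncurry_def]
          have m1 : StronglyMeasurable fun z : Euc d × ℝ => gE lam (e n) z.2 :=
            (gE_meas hlam (e n)).comp_measurable measurable_snd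
          have hψc := hψ.continuous
          refine StronglyMeasurable.aestronglyMeasurable ?_
          refine ((Continuous.stronglyMeasurable (by fun_prop)).mul
            (((Continuous.stronglyMeasurable (by fun_prop)).mul m1).mul
              (Continuous.stronglyMeasurable (by fun_prop)))).mul
                (Continuous.stronglyMeasurable (by fun_prop))
        · simp only [Function.uncurry_def]
          rw [norm_mul, hXn, mul_one, norm_mul, norm_mul, norm_mul, norm_mul, norm_mul, Complex.norm_real,
            Complex.norm_real, Complex.norm_exp]
          have hz : (-(Complex.I * (z.2:ℂ) * (r z.1 : ℝ))).re = 0 := by simp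
          rw [hz, Real.exp_zero, mul_one, Real.norm_of_nonneg hG0]
          by_cases h : ψ z.2 = 0
          · simp [h]
          · gcongr
            exact gE_bound hlam (hepos n) (hA.trans (hsupp _ h).1)
    rw [h1]
    exact psi_bound hlam (hepos n) ψ A B M hA hB hM0 hsupp hM _ D hD hI
  have hK := le_of_tendsto hKlim.norm (Eventually.of_forall hKn)
  have hfin : invFTd (fun ξ => ((2 * Real.pi)⁻¹ * q ξ : ℝ) • F0 (r ξ)) x =
      (((2 * Real.pi) ^ d)⁻¹ : ℝ) • (((2 * Real.pi)⁻¹ : ℝ) • ∫ ξ, (q ξ : ℂ) * F0 (r ξ) * X ξ) := by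
    simp only [invFTd]
    congr 1
    rw [← integral_smul]
    congr 1; ext ξ
    simp only [Complex.real_smul, hX]
    push_cast; ring
  rw [hfin, norm_smul, norm_smul, Real.norm_of_nonneg (by positivity), Real.norm_of_nonneg (by positivity)]
  gcongr

lemma rho_mod {d : ℕ} {Ω : Set (Euc d)} {ρ : Euc d → ℝ} (hρ : IsMinkowskiGauge d Ω ρ)
    (χ : ℝ → ℝ) (hχ : Function.support χ ⊆ Set.Ioo (1/2 : ℝ) 2) :
    ∃ (r : Euc d → ℝ) (K : Set (Euc d)), ContDiff ℝ (⊤ : ℕ∞) r ∧ IsCompact K ∧ (0 : Euc d) ∉ K ∧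
      (∀ ξ ∈ K, fderiv ℝ r ξ = fderiv ℝ ρ ξ) ∧ (∀ ξ, ξ ∉ K → χ (r ξ) = 0) ∧
      (∀ ξ, r ξ = ρ ξ ∨ (χ (r ξ) = 0 ∧ χ (ρ ξ) = 0)) := by
  have hcont : Continuous ρ := by
    rw [hρ.eq_gauge]
    exact continuous_gauge hρ.convex (hρ.isOpen.mem_nhds hρ.zero_mem)
  have h0 : ρ 0 = 0 := by rw [hρ.eq_gauge, gauge_zero]
  have hnn : ∀ ξ, 0 ≤ ρ ξ := by intro ξ; rw [hρ.eq_gauge]; exact gauge_nonneg ξ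
  have hχ0 : ∀ t : ℝ, t ≤ 1/2 → χ t = 0 := by
    intro t ht
    by_contra h
    have := (hχ h).1
    linarith
  have hχ2 : ∀ t : ℝ, 2 ≤ t → χ t = 0 := by
    intro t ht
    by_contra h
    have := (hχ h).2
    linarith
  obtain ⟨δ, hδ, hball⟩ := Metric.continuousAt_iff.1 (hcont.continuousAt (x := 0)) (1/2) (by norm_num)
  have hsmall : ∀ ξ : Euc d, ‖ξ‖ < δ → ρ ξ < 1/2 := by
    intro ξ hξ
    have := hball (x := ξ) (by simpa using hξ)
    rw [h0, Real.dist_eq, sub_zero] at this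
    exact (le_abs_self _).trans_lt this
  let f : ContDiffBump (0 : Euc d) := ⟨δ/4, δ/2, by positivity, by linarith⟩
  let K : Set (Euc d) := {ξ | 1/2 ≤ ρ ξ ∧ ρ ξ ≤ 2}
  have hrval : ∀ ξ : Euc d, δ/2 ≤ ‖ξ‖ → (1 - f ξ) * ρ ξ = ρ ξ := by
    intro ξ hξ
    rw [f.zero_of_le_dist (by simpa using hξ)]; ring
  have hKbig : ∀ ξ ∈ K, δ ≤ ‖ξ‖ := by
    intro ξ hξ
    by_contra h
    have := hsmall ξ (not_le.1 h)
    have h1 : 1/2 ≤ ρ ξ := hξ.1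
    linarith
  refine ⟨fun ξ => (1 - f ξ) * ρ ξ, K, ?_, ?_, ?_, ?_, ?_, ?_⟩
  · rw [contDiff_iff_contDiffAt]
    intro ξ
    by_cases hξ : ξ = 0
    · subst hξ
      refine (contDiffAt_const (c := (0:ℝ))).congr_of_eventuallyEq ?_
      filter_upwards [f.eventuallyEq_one] with y hy
      simp only [hy, Pi.one_apply, sub_self, zero_mul]
    · have h1 : ContDiffAt ℝ (⊤ : ℕ∞) ρ ξ := hρ.smooth.contDiffAt (isOpen_compl_singleton.mem_nhds hξ)
      exact (contDiffAt_const.sub f.contDiffAt).mul h1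
  · have hcl : IsClosed K := (isClosed_le continuous_const hcont).inter (isClosed_le hcont continuous_const)
    refine Metric.isCompact_of_isClosed_isBounded hcl ?_
    obtain ⟨R, hR, hRs⟩ := hρ.isBounded.subset_closedBall_lt 0 0
    refine (Metric.isBounded_closedBall (x := (0:Euc d)) (r := 2 * R)).subset ?_
    intro ξ hξ
    have h1 : ‖ξ‖ / R ≤ gauge Ω ξ :=
      le_gauge_of_subset_closedBall (absorbent_nhds_zero (hρ.isOpen.mem_nhds hρ.zero_mem)) hR.le hRs
    rw [← hρ.eq_gauge] at h1
    have h2 := h1.trans hξ.2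
    rw [div_le_iff₀ hR] at h2
    simpa using h2
  · intro h
    have := hKbig 0 h
    simp at this; linarith
  · intro ξ hξ
    refine Filter.EventuallyEq.fderiv_eq ?_
    have hlt : δ/2 < ‖ξ‖ := by have := hKbig ξ hξ; linarith
    filter_upwards [continuous_norm.continuousAt.eventually (lt_mem_nhds hlt)] with y hy
    exact hrval y hy.le
  · intro ξ hξ
    by_cases h : δ/2 ≤ ‖ξ‖
    · simp only [hrval ξ h]
      by_cases h1 : 1/2 ≤ ρ ξ
      · have : ¬ ρ ξ ≤ 2 := fun h2 => hξ ⟨h1, h2⟩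
        exact hχ2 _ (by linarith)
      · exact hχ0 _ (by linarith)
    · refine hχ0 _ ?_
      have h1 := hsmall ξ (by linarith)
      have h2 := f.nonneg (x := ξ)
      have h3 := f.le_one (x := ξ)
      nlinarith [hnn ξ]
  · intro ξ
    by_cases h : δ/2 ≤ ‖ξ‖
    · exact Or.inl (hrval ξ h)
    · right
      have h1 := hsmall ξ (by linarith)
      have h2 := f.nonneg (x := ξ)
      have h3 := f.le_one (x := ξ)
      exact ⟨hχ0 _ (by nlinarith [hnn ξ]), hχ0 _ h1.le⟩

lemma hfun_congr (χ Φ Ψ : ℝ → ℝ) (lam : ℝ) (ℓ : ℕ) {a b : ℝ} (h : a = b ∨ (χ a = 0 ∧ χ b = 0)) :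
    hfun χ Φ Ψ lam ℓ b = hfun χ Φ Ψ lam ℓ a := by
  rcases h with h | ⟨h1, h2⟩
  · rw [h]
  · cases ℓ <;> simp [hfun, h1, h2]

lemma FT1R_dilate (Ψ : ℝ → ℝ) {t : ℝ} (ht : 0 < t) (r : ℝ) :
    t • FT1R Ψ (t * r) = FT1R (fun s => Ψ (s / t)) r := by
  simp only [FT1R, FT1]
  have := Measure.integral_comp_div (fun s : ℝ => (Ψ s : ℂ) *
    Complex.exp (-(Complex.I * (s : ℂ) * ((t * r : ℝ) : ℂ)))) t
  rw [abs_of_pos ht] at this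
  rw [← this]
  congr 1; ext s
  congr 3
  have : (t : ℂ) ≠ 0 := by exact_mod_cast ht.ne'
  push_cast
  field_simp

/-- Nonvanishing of the phase gradient. -/
lemma phase_ne {d : ℕ} (r : Euc d → ℝ) (hr : ContDiff ℝ (⊤ : ℕ∞) r) (ω ξ : Euc d) (σ : ℝ)
    (h : ‖ω‖ ≠ |σ| * ‖fderiv ℝ r ξ‖) :
    ∃ j, fderiv ℝ (fun q : (Euc d × ℝ) × Euc d => ⟪q.1.1, q.2⟫ - q.1.2 * r q.2) ((ω, σ), ξ)
      (0, EuclideanSpace.single j 1) ≠ 0 := by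
  by_contra! hall
  have hθ : ContDiff ℝ (⊤ : ℕ∞) (fun q : (Euc d × ℝ) × Euc d => ⟪q.1.1, q.2⟫ - q.1.2 * r q.2) := by
    have := hr.comp (contDiff_snd (𝕜 := ℝ) (E := Euc d × ℝ) (F := Euc d))
    exact ((contDiff_fst.fst).inner ℝ contDiff_snd).sub ((contDiff_fst.snd).mul this)
  have hd : HasFDerivAt (fun y : Euc d => ⟪ω, y⟫ - σ * r y)
      (innerSL ℝ ω - σ • fderiv ℝ r ξ) ξ := by
    refine HasFDerivAt.sub (innerSL ℝ ω).hasFDerivAt ?_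
    exact ((hr.differentiable (by simp)) ξ).hasFDerivAt.const_mul σ
  have hd2 : HasFDerivAt (fun y : Euc d => ⟪ω, y⟫ - σ * r y) _ ξ :=
    ((hθ.differentiable (by simp)) ((ω, σ), ξ)).hasFDerivAt.comp ξ
      (hasFDerivAt_prodMk_right (𝕜 := ℝ) (ω, σ) ξ)
  have he := hd.unique hd2
  have hz : innerSL ℝ ω - σ • fderiv ℝ r ξ = 0 := by
    apply ContinuousLinearMap.coe_injective
    refine (EuclideanSpace.basisFun (Fin d) ℝ).toBasis.ext fun j => ?_
    have := hall j
    rw [he]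
    simpa using this
  rw [sub_eq_zero] at hz
  apply h
  have := congrArg norm hz
  rwa [innerSL_apply_norm, norm_smul, Real.norm_eq_abs] at this

lemma osc_far {d : ℕ} (r : Euc d → ℝ) (hr : ContDiff ℝ (⊤ : ℕ∞) r) (K : Set (Euc d))
    (hK : IsCompact K) (q : Euc d → ℝ) (hq : ContDiff ℝ (⊤ : ℕ∞) q) (hqK : ∀ ξ, ξ ∉ K → q ξ = 0)
    (C0 : ℝ) (hC0 : 0 < C0) (hg : ∀ ξ ∈ K, ‖fderiv ℝ r ξ‖ ≤ C0) (N : ℕ) :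
    ∃ C : ℝ, 0 ≤ C ∧ ∀ (x : Euc d) (s : ℝ), 0 < ‖x‖ → |s| * (4 * C0) ≤ ‖x‖ →
      ‖∫ ξ, (q ξ : ℂ) * Complex.exp (Complex.I * (⟪x, ξ⟫ - s * r ξ : ℝ))‖ ≤ C * (‖x‖ ^ N)⁻¹ := by
  have hθ : ContDiff ℝ (⊤ : ℕ∞) (fun q : (Euc d × ℝ) × Euc d => ⟪q.1.1, q.2⟫ - q.1.2 * r q.2) := by
    have := hr.comp (contDiff_snd (𝕜 := ℝ) (E := Euc d × ℝ) (F := Euc d))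
    exact ((contDiff_fst.fst).inner ℝ contDiff_snd).sub ((contDiff_fst.snd).mul this)
  have ha : ContDiff ℝ (⊤ : ℕ∞) (fun p : (Euc d × ℝ) × Euc d => (q p.2 : ℂ)) :=
    Complex.ofRealCLM.contDiff.comp (hq.comp contDiff_snd)
  obtain ⟨C, hC, hb⟩ := nsp _ hθ K hK
    (Metric.sphere (0 : Euc d) 1 ×ˢ Set.Icc (-(1 / (4 * C0))) (1 / (4 * C0)))
    ((isCompact_sphere _ _).prod isCompact_Icc) (by
      rintro ⟨ω, σ⟩ ⟨h1, h2⟩ ξ hξ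
      refine phase_ne r hr ω ξ σ ?_
      have h1' : ‖ω‖ = 1 := by simpa using h1
      have h2' : |σ| ≤ 1 / (4 * C0) := abs_le.2 h2
      rw [h1']
      have : |σ| * ‖fderiv ℝ r ξ‖ ≤ 1 / (4 * C0) * C0 :=
        mul_le_mul h2' (hg ξ hξ) (norm_nonneg _) (by positivity)
      have h3 : 1 / (4 * C0) * C0 = 1 / 4 := by field_simp
      rw [h3] at this
      intro h; linarith) N _ ha (fun p ξ hξ => by simp [hqK ξ hξ])
  refine ⟨C, hC, fun x s hx hs => ?_⟩
  have hmem : ((‖x‖⁻¹ • x, s / ‖x‖) : Euc d × ℝ) ∈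
      (Metric.sphere (0 : Euc d) 1 ×ˢ Set.Icc (-(1 / (4 * C0))) (1 / (4 * C0))) := by
    refine ⟨?_, ?_⟩
    · simp [norm_smul, hx.ne']
    · refine abs_le.1 ?_
      simp only
      rw [abs_div, abs_of_pos hx, div_le_div_iff₀ hx (by positivity)]
      linarith
  refine le_of_eq_of_le ?_ (hb _ hmem ‖x‖ hx)
  congr 1
  refine integral_congr_ae (Eventually.of_forall fun ξ => ?_)
  simp only
  congr 5
  rw [inner_smul_left]
  simp only [conj_trivial]
  field_simp

lemma osc_near {d : ℕ} (r : Euc d → ℝ) (hr : ContDiff ℝ (⊤ : ℕ∞) r) (K : Set (Euc d))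
    (hK : IsCompact K) (q : Euc d → ℝ) (hq : ContDiff ℝ (⊤ : ℕ∞) q) (hqK : ∀ ξ, ξ ∉ K → q ξ = 0)
    (c0 : ℝ) (hg : ∀ ξ ∈ K, c0 < ‖fderiv ℝ r ξ‖) (N : ℕ) :
    ∃ C : ℝ, 0 ≤ C ∧ ∀ (x : Euc d) (s : ℝ), 0 < |s| → ‖x‖ ≤ |s| * c0 →
      ‖∫ ξ, (q ξ : ℂ) * Complex.exp (Complex.I * (⟪x, ξ⟫ - s * r ξ : ℝ))‖ ≤ C * (|s| ^ N)⁻¹ := by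
  have hθ : ContDiff ℝ (⊤ : ℕ∞) (fun q : (Euc d × ℝ) × Euc d => ⟪q.1.1, q.2⟫ - q.1.2 * r q.2) := by
    have := hr.comp (contDiff_snd (𝕜 := ℝ) (E := Euc d × ℝ) (F := Euc d))
    exact ((contDiff_fst.fst).inner ℝ contDiff_snd).sub ((contDiff_fst.snd).mul this)
  have ha : ContDiff ℝ (⊤ : ℕ∞) (fun p : (Euc d × ℝ) × Euc d => (q p.2 : ℂ)) :=
    Complex.ofRealCLM.contDiff.comp (hq.comp contDiff_snd)
  obtain ⟨C, hC, hb⟩ := nsp _ hθ K hK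
    (Metric.closedBall (0 : Euc d) c0 ×ˢ Metric.sphere (0 : ℝ) 1)
    ((isCompact_closedBall _ _).prod (isCompact_sphere _ _)) (by
      rintro ⟨ω, σ⟩ ⟨h1, h2⟩ ξ hξ
      refine phase_ne r hr ω ξ σ ?_
      have h1' : ‖ω‖ ≤ c0 := by simpa using h1
      have h2' : |σ| = 1 := by simpa using h2
      rw [h2', one_mul]
      exact (h1'.trans_lt (hg ξ hξ)).ne) N _ ha (fun p ξ hξ => by simp [hqK ξ hξ])
  refine ⟨C, hC, fun x s hs hx => ?_⟩
  have hmem : ((|s|⁻¹ • x, s / |s|) : Euc d × ℝ) ∈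
      (Metric.closedBall (0 : Euc d) c0 ×ˢ Metric.sphere (0 : ℝ) 1) := by
    refine ⟨?_, ?_⟩
    · simp only [mem_closedBall_zero_iff, norm_smul, norm_inv, Real.norm_eq_abs, abs_abs]
      rw [inv_mul_le_iff₀ hs]; exact hx
    · simp [abs_div, hs.ne', abs_pos.1 hs]
  refine le_of_eq_of_le ?_ (hb _ hmem |s| hs)
  congr 1
  refine integral_congr_ae (Eventually.of_forall fun ξ => ?_)
  simp only
  congr 5
  rw [inner_smul_left]
  simp only [conj_trivial]
  field_simp

lemma HData.Psi_facts {lam : ℝ} {N0 : ℕ} {χ Φ Ψ : ℝ → ℝ} (hH : HData lam N0 χ Φ Ψ) :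
    ContDiff ℝ (⊤ : ℕ∞) Ψ ∧ (∀ s, Ψ s ≠ 0 → 1 / 2 ≤ |s| ∧ |s| ≤ 2) ∧ HasCompactSupport Ψ := by
  have h2 : ∀ s, Ψ s ≠ 0 → 1 / 2 ≤ |s| ∧ |s| ≤ 2 := by
    intro s hs
    rw [hH.hΨ] at hs
    constructor
    · by_contra h
      apply hs
      simp only
      rw [hH.hΦone s (by linarith), hH.hΦone (s / 2) (by rw [abs_div]; norm_num; linarith [abs_nonneg s])]
      ring
    · by_contra h
      apply hs
      simp only
      rw [hH.hΦzero s (by linarith), hH.hΦzero (s / 2) (by rw [abs_div]; norm_num; linarith)]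
      ring
  refine ⟨?_, h2, ?_⟩
  · rw [hH.hΨ]
    exact (hH.hΦsm.comp (contDiff_id.div_const 2)).sub hH.hΦsm
  · refine HasCompactSupport.of_support_subset_isCompact (isCompact_Icc (a := (-2:ℝ)) (b := 2)) ?_
    intro s hs
    exact abs_le.1 (h2 s hs).2

lemma ell_zero {d : ℕ} {lam : ℝ} (hlam : 0 < lam) (χ Φ Ψ : ℝ → ℝ) (hχ : ContDiff ℝ (⊤ : ℕ∞) χ)
    (hΦ : ContDiff ℝ (⊤ : ℕ∞) Φ) (hΦc : HasCompactSupport Φ)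
    (r : Euc d → ℝ) (hr : ContDiff ℝ (⊤ : ℕ∞) r) (K : Set (Euc d))
    (hK : IsCompact K) (hqK : ∀ ξ, ξ ∉ K → χ (r ξ) = 0) (N : ℕ) :
    ∃ C : ℝ, 0 ≤ C ∧ ∀ x, ‖x‖ ^ N * ‖invFTd (fun ξ => hfun χ Φ Ψ lam 0 (r ξ)) x‖ ≤ C := by
  obtain ⟨f, hf⟩ := FT1R_schwartz Φ hΦ hΦc
  refine invFTd_decay _ ?_ ?_ N
  · have h1 : ContDiff ℝ (⊤ : ℕ∞) (fun ϱ => ∫ u : ℝ, ((max (1 - u) 0) ^ lam : ℝ) • f (ϱ - u)) :=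
      contDiff_infty.2 fun n => conv_contDiff hlam n f
    simp only [hfun, hf]
    exact (contDiff_const.mul (hχ.comp hr)).smul (h1.comp hr)
  · refine HasCompactSupport.of_support_subset_isCompact hK ?_
    intro ξ hξ
    by_contra h
    apply hξ
    simp [hfun, hqK ξ h]

lemma ell_succ {lam : ℝ} (χ Φ Ψ : ℝ → ℝ) (ℓ : ℕ) (t : ℝ) :
    hfun χ Φ Ψ lam (ℓ + 1) t = ((2 * Real.pi)⁻¹ * χ t : ℝ) •
      ∫ u : ℝ, ((max (1 - u) 0) ^ lam : ℝ) • FT1R (fun s => Ψ (s / 2 ^ ℓ)) (t - u) := by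
  simp only [hfun]
  congr 2; ext u
  rw [FT1R_dilate Ψ (by positivity)]

/-- The kernels `K_{λ,ℓ} = 𝓕⁻¹[h_{λ,ℓ} ∘ ρ]` are essentially supported
in the annulus `{c₀ 2^{ℓ-2} ≤ |x| ≤ C₀ 2^{ℓ+2}}`. -/
theorem kernel_essential_support
    (d : ℕ) (hd : 2 ≤ d) (Ω : Set (Euc d)) (ρ : Euc d → ℝ)
    (hρ : IsMinkowskiGauge d Ω ρ)
    (lam : ℝ) (hlam : 0 < lam) (N0 : ℕ) (hN0 : d < N0)
    (χ Φ Ψ : ℝ → ℝ) (hH : HData lam N0 χ Φ Ψ)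
    (c0 C0 : ℝ) (hc0 : 0 < c0) (hC0 : 0 < C0)
    (hgrad : ∀ ξ : Euc d, ξ ≠ 0 → c0 < ‖fderiv ℝ ρ ξ‖ ∧ ‖fderiv ℝ ρ ξ‖ ≤ C0) :
    ∀ N : ℕ, ∃ C : ℝ, ∀ (ℓ : ℕ) (x : Euc d),
      ((2:ℝ) ^ ((ℓ : ℤ) + 2) * C0 ≤ ‖x‖ →
        ‖invFTd (fun ξ => hfun χ Φ Ψ lam ℓ (ρ ξ)) x‖ ≤ C * ‖x‖ ^ (-(N : ℝ))) ∧
      (‖x‖ ≤ (2:ℝ) ^ ((ℓ : ℤ) - 2) * c0 →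
        ‖invFTd (fun ξ => hfun χ Φ Ψ lam ℓ (ρ ξ)) x‖ ≤ C * (2:ℝ) ^ (-(ℓ : ℝ) * (N : ℝ))) := by
  intro N
  obtain ⟨r, K, hr, hK, h0K, hfd, hqK, hcongr⟩ := rho_mod hρ χ hH.hχsupp
  have hfun_eq : ∀ ℓ, (fun ξ => hfun χ Φ Ψ lam ℓ (ρ ξ)) = fun ξ => hfun χ Φ Ψ lam ℓ (r ξ) := by
    intro ℓ; ext ξ; exact hfun_congr χ Φ Ψ lam ℓ (hcongr ξ)
  simp only [hfun_eq]
  have hg : ∀ ξ ∈ K, c0 < ‖fderiv ℝ r ξ‖ ∧ ‖fderiv ℝ r ξ‖ ≤ C0 := by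
    intro ξ hξ
    rw [hfd ξ hξ]
    exact hgrad ξ (fun h => h0K (h ▸ hξ))
  have hΦc : HasCompactSupport Φ := by
    refine HasCompactSupport.of_support_subset_isCompact (isCompact_Icc (a := (-1:ℝ)) (b := 1)) ?_
    intro s hs
    refine abs_le.1 ?_
    by_contra h
    exact hs (hH.hΦzero s (not_le.1 h).le)
  obtain ⟨hΨ, hΨs, hΨc⟩ := hH.Psi_facts
  obtain ⟨M, hM⟩ := hΨc.exists_bound_of_continuous hΨ.continuous
  have hM0 : 0 ≤ M := (norm_nonneg _).trans (hM 0)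
  set q : Euc d → ℝ := fun ξ => χ (r ξ) with hqdef
  have hq : ContDiff ℝ (⊤ : ℕ∞) q := hH.hχsm.comp hr
  have hqc : HasCompactSupport q := by
    refine HasCompactSupport.of_support_subset_isCompact hK ?_
    intro ξ hξ
    by_contra h
    exact hξ (hqK ξ h)
  obtain ⟨Ca, hCa, ha⟩ := ell_zero hlam χ Φ Ψ hH.hχsm hH.hΦsm hΦc r hr K hK hqK N
  obtain ⟨Cb, hCb, hb⟩ := ell_zero hlam χ Φ Ψ hH.hχsm hH.hΦsm hΦc r hr K hK hqK 0
  obtain ⟨Cf, hCf, hf⟩ := osc_far r hr K hK q hq hqK C0 hC0 (fun ξ hξ => (hg ξ hξ).2) (N + 1)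
  obtain ⟨Cn, hCn, hn⟩ := osc_near r hr K hK q hq hqK c0 (fun ξ hξ => (hg ξ hξ).1) (N + 1)
  set E : ℝ := ((2 * Real.pi) ^ d)⁻¹ * ((2 * Real.pi)⁻¹ *
    (M * (2 ^ (lam + 1) * ‖Complex.Gamma (lam + 1 : ℝ)‖))) with hE
  have hE0 : 0 ≤ E := by positivity
  have hker : ∀ (ℓ : ℕ) (x : Euc d) (D : ℝ), 0 ≤ D →
      (∀ s : ℝ, (2:ℝ) ^ ℓ / 2 ≤ |s| → |s| ≤ 2 * 2 ^ ℓ →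
        ‖∫ ξ, (q ξ : ℂ) * Complex.exp (Complex.I * (⟪x, ξ⟫ - s * r ξ : ℝ))‖ ≤ D) →
      ‖invFTd (fun ξ => hfun χ Φ Ψ lam (ℓ + 1) (r ξ)) x‖ ≤ E * D * (4 * 2 ^ ℓ) := by
    intro ℓ x D hD hI
    have ht : (0:ℝ) < 2 ^ ℓ := by positivity
    have ht1 : (1:ℝ) ≤ 2 ^ ℓ := one_le_pow₀ (by norm_num)
    have hdil : ContDiff ℝ (⊤ : ℕ∞) (fun s : ℝ => Ψ (s / 2 ^ ℓ)) :=
      hΨ.comp (contDiff_id.div_const _)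
    have hsupp : ∀ s : ℝ, Ψ (s / 2 ^ ℓ) ≠ 0 → (2:ℝ) ^ ℓ / 2 ≤ |s| ∧ |s| ≤ 2 * 2 ^ ℓ := by
      intro s hs
      obtain ⟨h1, h2⟩ := hΨs _ hs
      rw [abs_div, abs_of_pos ht] at h1 h2
      rw [le_div_iff₀ ht] at h1
      rw [div_le_iff₀ ht] at h2
      exact ⟨by linarith, h2⟩
    have hcs : HasCompactSupport (fun s : ℝ => Ψ (s / 2 ^ ℓ)) := by
      refine HasCompactSupport.of_support_subset_isCompact
        (isCompact_Icc (a := (-(2 * 2 ^ ℓ) : ℝ)) (b := 2 * 2 ^ ℓ)) ?_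
      intro s hs
      exact abs_le.1 (hsupp s hs).2
    have := kernel_bound hlam (fun s : ℝ => Ψ (s / 2 ^ ℓ)) hdil hcs ((2:ℝ) ^ ℓ / 2) (2 * 2 ^ ℓ) M
      (by linarith) (by positivity) hM0 hsupp (fun s => hM _) q r hq.continuous hqc hr.continuous
      x D hD hI
    simp only [ell_succ]
    refine this.trans (le_of_eq ?_)
    rw [hE]; ring
  refine ⟨Ca + Cb + E * Cf / (2 * C0) + E * Cn * 2 ^ (2 * N + 3), fun ℓ x => ?_⟩
  have hX1 : 0 ≤ E * Cf / (2 * C0) := by positivity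
  have hX2 : 0 ≤ E * Cn * 2 ^ (2 * N + 3) := by positivity
  cases ℓ with
  | zero =>
    constructor
    · intro hx
      have hxp : 0 < ‖x‖ := lt_of_lt_of_le (by positivity) hx
      rw [Real.rpow_neg hxp.le, Real.rpow_natCast, ← div_eq_mul_inv, le_div_iff₀ (by positivity)]
      have := ha x
      linarith
    · intro hx
      have := hb x
      simp only [pow_zero, one_mul] at this
      simp only [Nat.cast_zero, neg_zero, zero_mul, Real.rpow_zero, mul_one]
      linarith
  | succ ℓ =>
    have ht : (0:ℝ) < 2 ^ ℓ := by positivity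
    constructor
    · intro hx
      have hz : (2:ℝ) ^ (((ℓ + 1 : ℕ) : ℤ) + 2) = 8 * 2 ^ ℓ := by
        rw [zpow_add₀ (by norm_num), zpow_natCast, pow_succ]; norm_num; ring
      rw [hz] at hx
      have hxp : 0 < ‖x‖ := lt_of_lt_of_le (by positivity) hx
      have h1 := hker ℓ x (Cf * (‖x‖ ^ (N + 1))⁻¹) (by positivity) (fun s _ hs => hf x s hxp (by
        have : |s| * (4 * C0) ≤ 2 * 2 ^ ℓ * (4 * C0) := by gcongr
        linarith))
      refine h1.trans ?_
      have h2 : 4 * (2:ℝ) ^ ℓ ≤ ‖x‖ / (2 * C0) := by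
        rw [le_div_iff₀ (by positivity)]; linarith
      have h3 : E * (Cf * (‖x‖ ^ (N + 1))⁻¹) * (4 * 2 ^ ℓ) ≤
          E * (Cf * (‖x‖ ^ (N + 1))⁻¹) * (‖x‖ / (2 * C0)) := by gcongr
      refine h3.trans ?_
      rw [Real.rpow_neg hxp.le, Real.rpow_natCast]
      have h4 : E * (Cf * (‖x‖ ^ (N + 1))⁻¹) * (‖x‖ / (2 * C0)) =
          E * Cf / (2 * C0) * (‖x‖ ^ N)⁻¹ := by
        rw [pow_succ]; field_simp
      rw [h4]
      gcongr
      linarith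
    · intro hx
      have hz : (2:ℝ) ^ (((ℓ + 1 : ℕ) : ℤ) - 2) = 2 ^ ℓ / 2 := by
        rw [zpow_sub₀ (by norm_num), zpow_natCast, pow_succ]; norm_num; ring
      rw [hz] at hx
      have h1 := hker ℓ x (Cn * ((2 ^ ℓ / 2) ^ (N + 1))⁻¹) (by positivity) (fun s hs _ => by
        have hsp : 0 < |s| := lt_of_lt_of_le (by positivity) hs
        refine (hn x s hsp (hx.trans (by gcongr))).trans ?_
        gcongr)
      refine h1.trans ?_
      have h5 : (2:ℝ) ^ (-((ℓ + 1 : ℕ) : ℝ) * (N : ℝ)) = ((2 * 2 ^ ℓ) ^ N)⁻¹ := by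
        rw [neg_mul, Real.rpow_neg (by norm_num), Real.rpow_mul (by norm_num), Real.rpow_natCast,
          Real.rpow_natCast, pow_succ, mul_comm ((2:ℝ) ^ ℓ)]
      have h4 : E * (Cn * ((2 ^ ℓ / 2) ^ (N + 1))⁻¹) * (4 * 2 ^ ℓ) =
          E * Cn * 2 ^ (2 * N + 3) * ((2 * 2 ^ ℓ) ^ N)⁻¹ := by
        generalize (2:ℝ) ^ ℓ = t at ht
        have e1 : (2:ℝ) ^ (2 * N + 3) = 2 ^ N * 2 ^ N * 8 := by
          rw [pow_add, two_mul, pow_add]; norm_num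
        rw [e1, div_pow, mul_pow, pow_succ, pow_succ]
        field_simp
        ring
      rw [h5, h4]
      gcongr
      linarith
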